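/- arXiv:2507.18698 — 11 statements merged into one kernel-verified Lean document; each statement's English description precedes it below -/
import Mathlib

section
/- Let m ≥ 0 and let ϑ(θ) = (1 − sin θ)/cos θ for θ ∈ (−π/2, π/2). Let λΩ, λD : (−π/2, π/2) → ℝ and μΩ, μD : (0, ∞) → ℝ be functions, let θ ∈ (−π/2, π/2), a > 0, and θ* ∈ (−π/2, π/2), and assume: (1) λΩ is strictly decreasing on (−π/2, π/2); (2) μD is strictly increasing on (0, ∞); (3) λD(θ) > m; (4) μΩ(a) = λD(θ)² − m²; (5) μD((λD(θ) + m)·ϑ(θ)) = λD(θ)² − m²; (6) ϑ(θ*) = a/(√(μΩ(a) + m²) + m) and λΩ(θ*) = √(μΩ(a) + m²). If μΩ(a) > μD(a), then λΩ(θ) > λD(θ). -/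
open Real Set

/-- The function ϑ(θ) = (1 − sin θ)/cos θ. -/
noncomputable def vartheta (θ : ℝ) : ℝ := (1 - Real.sin θ) / Real.cos θ

theorem vt_aux (x : ℝ) (hx : x ∈ Ioo (-(π/2)) (π/2)) :
    0 < (1 - Real.sin x) / Real.cos x ∧ Real.sin x * (1 + ((1 - Real.sin x) / Real.cos x)^2) = 1 - ((1 - Real.sin x) / Real.cos x)^2 := by
  have hc : 0 < Real.cos x := Real.cos_pos_of_mem_Ioo hx
  have hs := Real.sin_sq_add_cos_sq x
  have h1 : Real.sin x < 1 := by nlinarith [sq_pos_of_pos hc]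
  refine ⟨div_pos (by linarith) hc, ?_⟩
  have hc2 : Real.cos x ^ 2 = 1 - Real.sin x ^ 2 := by linarith
  field_simp
  rw [hc2]; ring

/-- Abstract form of Theorem 2.1(i). -/
theorem stmt_0 (m : ℝ) (hm : 0 ≤ m)
    (lamΩ lamD μΩ μD : ℝ → ℝ)
    (θ a θs : ℝ)
    (hθ : θ ∈ Ioo (-(π/2)) (π/2)) (ha : 0 < a) (hθs : θs ∈ Ioo (-(π/2)) (π/2))
    (h1 : StrictAntiOn lamΩ (Ioo (-(π/2)) (π/2)))
    (h2 : StrictMonoOn μD (Ioi 0))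
    (h3 : lamD θ > m)
    (h4 : μΩ a = (lamD θ)^2 - m^2)
    (h5 : μD ((lamD θ + m) * vartheta θ) = (lamD θ)^2 - m^2)
    (h6a : vartheta θs = a / (Real.sqrt (μΩ a + m^2) + m))
    (h6b : lamΩ θs = Real.sqrt (μΩ a + m^2))
    (h7 : μΩ a > μD a) :
    lamΩ θ > lamD θ := by
  have hL : 0 < lamD θ := by linarith
  have hsq : Real.sqrt (μΩ a + m^2) = lamD θ := by
    rw [h4, sub_add_cancel, Real.sqrt_sq hL.le]
  rw [hsq] at h6a h6b
  obtain ⟨p, e⟩ := vt_aux θ hθ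
  obtain ⟨ps, es⟩ := vt_aux θs hθs
  change 0 < vartheta θ at p
  change 0 < vartheta θs at ps
  change _ * (1 + vartheta θ ^ 2) = 1 - vartheta θ ^ 2 at e
  change _ * (1 + vartheta θs ^ 2) = 1 - vartheta θs ^ 2 at es
  have hLm : 0 < lamD θ + m := by linarith
  have hlt : a < (lamD θ + m) * vartheta θ := by
    refine (h2.lt_iff_lt ha (mul_pos hLm p)).1 ?_
    rw [h5, ← h4]; exact h7
  have hv : vartheta θs < vartheta θ := by
    rw [h6a, div_lt_iff₀ hLm]; linarith
  have hv2 : vartheta θs ^ 2 < vartheta θ ^ 2 := by gcongr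
  have hsin : Real.sin θ < Real.sin θs := by
    have e1 : Real.sin θ = 2 / (1 + vartheta θ ^ 2) - 1 := by
      field_simp; linarith
    have e2 : Real.sin θs = 2 / (1 + vartheta θs ^ 2) - 1 := by
      field_simp; linarith
    rw [e1, e2]
    gcongr
  have hth : θ < θs :=
    (Real.strictMonoOn_sin.lt_iff_lt (Ioo_subset_Icc_self hθ) (Ioo_subset_Icc_self hθs)).1 hsin
  have := h1 hθ hθs hth
  rw [h6b] at this
  exact this
end

section
/- Let m ≥ 0 and let ϑ(θ) = (1 − sin θ)/cos θ for θ ∈ (−π/2, π/2). Let λΩ, λD : (−π/2, π/2) → ℝ and μΩ, μD : (0, ∞) → ℝ be functions, let θ ∈ (−π/2, π/2), a > 0, and θ* ∈ (−π/2, π/2), and assume: (1) λD is strictly decreasing on (−π/2, π/2); (2) μΩ is strictly increasing on (0, ∞); (3) μD(a) > 0; (4) λΩ(θ) = √(μD(a) + m²); (5) ϑ(θ*) = a/(√(μD(a) + m²) + m) and λD(θ*) = √(μD(a) + m²); (6) μΩ((λΩ(θ) + m)·ϑ(θ)) = λΩ(θ)² − m². If λΩ(θ) > λD(θ), then μΩ(a)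 > μD(a). -/
open Real Set

/-- Abstract form of Theorem 2.1(ii). -/
theorem stmt_1 (m : ℝ) (hm : 0 ≤ m)
    (lamΩ lamD μΩ μD : ℝ → ℝ)
    (θ a θs : ℝ)
    (hθ : θ ∈ Ioo (-(π/2)) (π/2)) (ha : 0 < a) (hθs : θs ∈ Ioo (-(π/2)) (π/2))
    (h1 : StrictAntiOn lamD (Ioo (-(π/2)) (π/2)))
    (h2 : StrictMonoOn μΩ (Ioi 0))
    (h3 : μD a > 0)
    (h4 : lamΩ θ = Real.sqrt (μD a + m^2))
    (h5a : vartheta θs = a / (Real.sqrt (μD a + m^2) + m))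
    (h5b : lamD θs = Real.sqrt (μD a + m^2))
    (h6 : μΩ ((lamΩ θ + m) * vartheta θ) = (lamΩ θ)^2 - m^2)
    (h7 : lamΩ θ > lamD θ) :
    μΩ a > μD a := by
  have hlt : θs < θ := by
    by_contra h
    have := h1.antitoneOn hθ hθs (not_lt.mp h)
    linarith
  have hc : 0 < Real.cos θ := Real.cos_pos_of_mem_Ioo hθ
  have hcs : 0 < Real.cos θs := Real.cos_pos_of_mem_Ioo hθs
  have hsin : Real.sin θs < Real.sin θ :=
    Real.strictMonoOn_sin ⟨hθs.1.le, hθs.2.le⟩ ⟨hθ.1.le, hθ.2.le⟩ hlt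
  have e := Real.sin_sq_add_cos_sq θ
  have es := Real.sin_sq_add_cos_sq θs
  have hu : 0 < 1 - Real.sin θ := by nlinarith
  have hv : 0 < 1 - Real.sin θs := by linarith
  have hvt : vartheta θ < vartheta θs := by
    unfold vartheta
    rw [div_lt_div_iff₀ hc hcs]
    apply lt_of_pow_lt_pow_left₀ 2 (by positivity)
    have e1 : Real.cos θ ^ 2 = (1 - Real.sin θ) * (1 + Real.sin θ) := by linarith
    have e2 : Real.cos θs ^ 2 = (1 - Real.sin θs) * (1 + Real.sin θs) := by linarith
    rw [mul_pow, mul_pow, e1, e2]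
    have := mul_pos (mul_pos hu hv) (sub_pos.mpr hsin)
    nlinarith
  have hpos : 0 < vartheta θ := div_pos hu hc
  have hs : 0 < Real.sqrt (μD a + m^2) := Real.sqrt_pos.mpr (by positivity)
  have hsq : Real.sqrt (μD a + m^2) ^ 2 = μD a + m^2 := Real.sq_sqrt (by positivity)
  rw [h4, hsq] at h6
  have hsm : 0 < Real.sqrt (μD a + m^2) + m := by linarith
  rw [h5a, lt_div_iff₀ hsm] at hvt
  have := h2 (mem_Ioi.mpr (mul_pos hsm hpos)) (mem_Ioi.mpr ha) (by linarith)
  linarith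
end

section
/- Let m ≥ 0, Λ > 0, and let ϑ(θ) = (1 − sin θ)/cos θ for θ ∈ (−π/2, π/2). Let S' ⊆ (0, ∞) × (0, ∞) be a set, and suppose there are functions μ : (0, ∞) → ℝ and λ : (−π/2, π/2) → ℝ such that: (1) for every a > 0, μ(a) > 0, (a, μ(a)) ∈ S', and μ(a) ≤ μ' whenever (a, μ') ∈ S'; (2) μ is continuous, strictly increasing, and its range is exactly (0, Λ); (3) the function a ↦ μ(a)/a is strictly decreasing on (0, ∞); (4) for every θ ∈ (−π/2, π/2), λ(θ) > m, ((λ(θ)+m)·ϑ(θ), λ(θ)² − m²) ∈ S', and λ(θ) ≤ λ' whenever λ' > m satisfies ((λ'+m)·ϑ(θ), λ'² − m²) ∈ S'. Then for every θ ∈ (−π/2, π/2), every λ₀ > m, and the pair (a, μ₀) := ((λ₀+m)·ϑ(θ), λ₀² − m²), one has λ₀ = λ(θ) if and only if μ₀ = μ(a). -/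
open Real Set

/-- Abstract form of Proposition 3.1. -/
theorem stmt_2 (m Λ : ℝ) (hm : 0 ≤ m) (hΛ : 0 < Λ)
    (S' : Set (ℝ × ℝ)) (hS' : S' ⊆ Ioi 0 ×ˢ Ioi 0)
    (μ lam : ℝ → ℝ)
    (h1 : ∀ a > 0, μ a > 0 ∧ (a, μ a) ∈ S' ∧ ∀ μ' : ℝ, (a, μ') ∈ S' → μ a ≤ μ')
    (h2cont : ContinuousOn μ (Ioi 0))
    (h2mono : StrictMonoOn μ (Ioi 0))
    (h2range : μ '' (Ioi 0) = Ioo 0 Λ)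
    (h3 : StrictAntiOn (fun a => μ a / a) (Ioi 0))
    (h4 : ∀ θ ∈ Ioo (-(π/2)) (π/2),
      lam θ > m ∧ ((lam θ + m) * vartheta θ, (lam θ)^2 - m^2) ∈ S' ∧
        ∀ lam' : ℝ, lam' > m → ((lam' + m) * vartheta θ, lam'^2 - m^2) ∈ S' → lam θ ≤ lam') :
    ∀ θ ∈ Ioo (-(π/2)) (π/2), ∀ lam₀ > m,
      lam₀ = lam θ ↔ lam₀^2 - m^2 = μ ((lam₀ + m) * vartheta θ) := by
  intro θ hθ
  have ht : 0 < vartheta θ := by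
    have hc : 0 < Real.cos θ := Real.cos_pos_of_mem_Ioo hθ
    unfold vartheta
    apply div_pos _ hc
    nlinarith [Real.sin_sq_add_cos_sq θ, Real.sin_le_one θ]
  obtain ⟨hl, hS, hmin⟩ := h4 θ hθ
  generalize vartheta θ = t at *
  generalize lam θ = l at *
  have pos : ∀ x > m, 0 < (x + m) * t := fun x hx => mul_pos (by linarith) ht
  -- cross-multiplied monotonicity
  have key : ∀ x > m, ∀ y > x, μ ((y + m) * t) * (x + m) < μ ((x + m) * t) * (y + m) := by
    intro x hx y hy
    have hX := pos x hx
    have hY := pos y (by linarith)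
    have h := h3 (mem_Ioi.2 hX) (mem_Ioi.2 hY) (mul_lt_mul_of_pos_right (by linarith) ht)
    simp only at h
    rw [div_lt_div_iff₀ hY hX, ← mul_assoc, ← mul_assoc] at h
    exact lt_of_mul_lt_mul_right h ht.le
  have fwd : l ^ 2 - m ^ 2 = μ ((l + m) * t) := by
    have hle := (h1 _ (pos l hl)).2.2 _ hS
    by_contra hne
    have hlt : μ ((l + m) * t) < l ^ 2 - m ^ 2 := lt_of_le_of_ne hle (Ne.symm hne)
    have hμ := (h1 _ (pos l hl)).1
    have hlm : 0 < l + m := by linarith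
    obtain ⟨d, hd⟩ : ∃ d, d = μ ((l + m) * t) / (l + m) := ⟨_, rfl⟩
    have hd0 : 0 < d := hd ▸ div_pos hμ hlm
    have hdm : d * (l + m) = μ ((l + m) * t) := by rw [hd]; field_simp
    have hdl : m + d < l := by
      have : d * (l + m) < (l - m) * (l + m) := by rw [hdm]; linarith
      have := lt_of_mul_lt_mul_right this hlm.le
      linarith
    have hk := key (m + d) (by linarith) l hdl
    rw [← hdm] at hk
    have hk2 : d * (m + d + m) < μ ((m + d + m) * t) := by
      apply lt_of_mul_lt_mul_right _ hlm.le
      linarith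
    have hcont : ContinuousOn (fun x => x ^ 2 - m ^ 2 - μ ((x + m) * t)) (Icc (m + d) l) := by
      apply ContinuousOn.sub (by fun_prop)
      apply h2cont.comp (by fun_prop)
      intro x hx
      exact pos x (by linarith [hx.1])
    obtain ⟨x, hx, hx0⟩ := intermediate_value_Ioo hdl.le hcont
      (show (0 : ℝ) ∈ Ioo ((m + d) ^ 2 - m ^ 2 - μ ((m + d + m) * t)) (l ^ 2 - m ^ 2 - μ ((l + m) * t)) from
        ⟨by nlinarith, by linarith⟩)
    simp only at hx0
    have hxm : x > m := by linarith [hx.1]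
    have h5 := hmin x hxm (by
      rw [show x ^ 2 - m ^ 2 = μ ((x + m) * t) by linarith]
      exact (h1 _ (pos x hxm)).2.1)
    linarith [hx.2]
  intro x hx
  constructor
  · rintro rfl
    exact fwd
  · intro h
    have h5 := hmin x hx (by rw [h]; exact (h1 _ (pos x hx)).2.1)
    by_contra hne
    have hlx : l < x := lt_of_le_of_ne h5 (Ne.symm hne)
    have hk := key l hl x hlx
    rw [← h, ← fwd] at hk
    have : 0 < (x + m) * (l + m) := mul_pos (by linarith) (by linarith)
    nlinarith [mul_pos this (sub_pos.2 hlx)]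
end

section
/- Let F : ℂ → ℂ be complex-differentiable on an open set containing the closed unit disk and injective on the closed unit disk, and set Ω := F(𝔻), where 𝔻 is the open unit disk. Let u : ℂ → ℂ be complex-differentiable on Ω and continuous on F(closed unit disk). Then ∫_𝔻 |u(F(z))|² |F'(z)|² dA(z) ≤ (1/2) · √(( ∫_𝔻 |F'(z)|² dA(z) ) / π) · ∫₀^{2π} |u(F(e^{iφ}))|² |F'(e^{iφ})| dφ, where dA denotes planar Lebesgue measure on 𝔻 and F' denotes the complex derivative of F. -/
open Real Set MeasureTheory


lemma aux_deriv_ne_zero (F : ℂ → ℂ) (V : Set ℂ) (hV : IsOpen V) (hF : DifferentiableOn ℂ F V)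
    (hinj : Set.InjOn F V) (z₀ : ℂ) (hz : z₀ ∈ V) : deriv F z₀ ≠ 0 := by
  intro hd
  have hVn : V ∈ nhds z₀ := hV.mem_nhds hz
  have hFa : AnalyticAt ℂ F z₀ := hF.analyticAt hVn
  have hfa : AnalyticAt ℂ (fun z => F z - F z₀) z₀ := hFa.sub analyticAt_const
  have hne : ¬ ∀ᶠ z in nhds z₀, F z - F z₀ = 0 := by
    intro h
    have h2 : ∀ᶠ z in nhdsWithin z₀ {z₀}ᶜ, False := by
      filter_upwards [nhdsWithin_le_nhds h, nhdsWithin_le_nhds hVn, self_mem_nhdsWithin] with z h1 h2 h3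
      exact h3 (hinj h2 hz (sub_eq_zero.mp h1))
    simp at h2
    exact (Filter.NeBot.ne inferInstance) h2
  obtain ⟨n, h, hha, hh0, hev⟩ := (hfa.exists_eventuallyEq_pow_smul_nonzero_iff).2 hne
  have hn0 : n ≠ 0 := by
    rintro rfl
    have := hev.self_of_nhds
    simp at this
    exact hh0 this.symm
  have hn1 : n ≠ 1 := by
    rintro rfl
    have h1 : HasDerivAt (fun z => (z - z₀)^1 • h z) (h z₀) z₀ := by
      have := ((hasDerivAt_id z₀).sub_const z₀).mul hha.differentiableAt.hasDerivAt
      simp only [pow_one, smul_eq_mul]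
      convert! this using 1
      simp
    have h2 := (h1.congr_of_eventuallyEq hev)
    have h3 := h2.add_const (F z₀)
    simp only [sub_add_cancel] at h3
    exact hh0 (h3.deriv.symm.trans hd)
  obtain ⟨c, hc⟩ := IsAlgClosed.exists_pow_nat_eq (h z₀) (Nat.pos_of_ne_zero hn0)
  have hc0 : c ≠ 0 := by
    rintro rfl
    rw [zero_pow hn0] at hc
    exact hh0 hc.symm
  set q : ℂ → ℂ := fun z => (h z / h z₀) ^ (1 / (n:ℂ)) with hq
  have hqd : DifferentiableAt ℂ q z₀ := by
    apply (hha.differentiableAt.div_const _).cpow_const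
    simp [hh0]
  have hqa : AnalyticAt ℂ q z₀ := by
    apply AnalyticAt.cpow (hha.div analyticAt_const hh0) analyticAt_const
    simp [hh0]
  have hq1 : q z₀ = 1 := by simp [hq, hh0]
  have hqn : ∀ z, q z ^ n = h z / h z₀ := by
    intro z
    simp [hq, hn0]
  set φ : ℂ → ℂ := fun z => (z - z₀) * (c * q z) with hφ
  have hφa : AnalyticAt ℂ φ z₀ := by
    apply (analyticAt_id.sub analyticAt_const).mul (analyticAt_const.mul hqa)
  have hφd : deriv φ z₀ = c := by
    have := ((hasDerivAt_id z₀).sub_const z₀).mul (hqd.hasDerivAt.const_mul c)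
    have h2 := this.deriv
    simp [hq1] at h2
    exact h2
  have hφ0 : φ z₀ = 0 := by simp [hφ]
  have hmap : Filter.map φ (nhds z₀) = nhds 0 := by
    have := hφa.hasStrictDerivAt.map_nhds_eq (by rw [hφd]; exact hc0)
    rwa [hφ0] at this
  have hW : {z | F z - F z₀ = φ z ^ n ∧ z ∈ V} ∈ nhds z₀ := by
    filter_upwards [hev, hVn] with z h1 h2
    refine ⟨?_, h2⟩
    rw [h1, hφ]
    simp only [mul_pow, hqn, hc, smul_eq_mul]
    field_simp
  have hI : φ '' {z | F z - F z₀ = φ z ^ n ∧ z ∈ V} ∈ nhds (0:ℂ) := by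
    rw [← hmap]; exact Filter.image_mem_map hW
  obtain ⟨ε, hε, hball⟩ := Metric.mem_nhds_iff.1 hI
  have hprim := Complex.isPrimitiveRoot_exp n hn0
  set ζ := Complex.exp (2 * π * Complex.I / n)
  have hζ : ‖ζ‖ = 1 := hprim.norm'_eq_one hn0
  have hw : ((ε/2 : ℝ) : ℂ) ∈ Metric.ball (0:ℂ) ε := by
    simp [abs_of_pos hε]; exact hε
  have hw2 : ζ * ((ε/2 : ℝ) : ℂ) ∈ Metric.ball (0:ℂ) ε := by
    simp [abs_of_pos hε, hζ]; exact hε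
  obtain ⟨z1, ⟨h11, h12⟩, h13⟩ := hball hw
  obtain ⟨z2, ⟨h21, h22⟩, h23⟩ := hball hw2
  have heq : F z1 = F z2 := by
    rw [h13] at h11
    rw [h23, mul_pow, hprim.pow_eq_one, one_mul, ← h11] at h21
    linear_combination -h21
  have := hinj h12 h22 heq
  subst this
  rw [h13] at h23
  have hε0 : ((ε/2 : ℝ) : ℂ) ≠ 0 := by
    exact_mod_cast (half_pos hε).ne'
  have : ζ = 1 := by
    have := mul_right_cancel₀ hε0 ((one_mul _).trans h23)
    exact this.symm
  exact hprim.ne_one (by omega) this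

lemma aux_sqrt (f : ℂ → ℂ) (hf : DifferentiableOn ℂ f (Metric.ball 0 1))
    (h0 : ∀ z ∈ Metric.ball (0:ℂ) 1, f z ≠ 0) :
    ∃ p : ℂ → ℂ, DifferentiableOn ℂ p (Metric.ball 0 1) ∧ 
      ∀ z ∈ Metric.ball (0:ℂ) 1, p z ^ 2 = f z := by
  have hd : DifferentiableOn ℂ (fun z => deriv f z / f z) (Metric.ball 0 1) := 
    (hf.deriv Metric.isOpen_ball).div hf h0
  obtain ⟨L, hL0, hL⟩ := hd.isExactOn_ball.with_val_at 0 (Complex.log (f 0))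
  have hfd : ∀ z ∈ Metric.ball (0:ℂ) 1, HasDerivAt f (deriv f z) z := fun z hz =>
    (hf.differentiableAt (Metric.isOpen_ball.mem_nhds hz)).hasDerivAt
  have key : ∀ z ∈ Metric.ball (0:ℂ) 1, HasDerivAt (fun z => f z * Complex.exp (- L z)) 0 z := by
    intro z hz
    have := (hfd z hz).mul ((hL z hz).neg.cexp)
    refine this.congr_deriv ?_
    have h4 : f z * (deriv f z / f z) = deriv f z := mul_div_cancel₀ _ (h0 z hz)
    linear_combination (-Complex.exp ((-L) z)) * h4
  have hz0 : (0:ℂ) ∈ Metric.ball (0:ℂ) 1 := by simp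
  have hconst : ∀ z ∈ Metric.ball (0:ℂ) 1, f z * Complex.exp (- L z) = 1 := by
    intro z hz
    have := (convex_ball (0:ℂ) 1).is_const_of_fderivWithin_eq_zero (𝕜 := ℂ) (f := fun z => f z * Complex.exp (- L z))
      (fun z hz => (key z hz).differentiableAt.differentiableWithinAt) (fun z hz => by
        rw [fderivWithin_of_isOpen Metric.isOpen_ball hz, (key z hz).hasFDerivAt.fderiv]
        ext; simp) hz hz0
    rw [this, hL0, Complex.exp_neg, Complex.exp_log (h0 0 hz0), mul_inv_cancel₀ (h0 0 hz0)]
  refine ⟨fun z => Complex.exp (L z / 2), ?_, ?_⟩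
  · intro z hz
    exact ((hL z hz).div_const 2).cexp.differentiableAt.differentiableWithinAt
  · intro z hz
    rw [← Complex.exp_nat_mul]
    have := hconst z hz
    rw [Complex.exp_neg] at this
    have h3 := Complex.exp_ne_zero (L z)
    field_simp at this
    rw [this]; congr 1; push_cast; ring

lemma aux_parseval (b : ℕ → ℂ) (hb : Summable (fun n => ‖b n‖)) (G : ℝ → ℂ)
    (hG : ∀ φ : ℝ, HasSum (fun n => b n * Complex.exp (φ * Complex.I) ^ n) (G φ)) :
    HasSum (fun n => ‖b n‖ ^ 2) ((2 * π)⁻¹ * ∫ φ in (0:ℝ)..(2*π), ‖G φ‖ ^ 2) := by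
  have hsum : Summable (fun n => ‖b n‖^2) := by
    refine Summable.of_nonneg_of_le (fun n => sq_nonneg _) (fun n => ?_) (hb.mul_left (∑' n, ‖b n‖))
    rw [sq]
    gcongr
    exact hb.le_tsum n (fun _ _ => norm_nonneg _)
  rw [hsum.hasSum_iff_tendsto_nat]
  set P : ℕ → Polynomial ℂ := fun N => ∑ n ∈ Finset.range N, Polynomial.monomial n (b n) with hP
  have hcoef : ∀ N i, (P N).coeff i = if i < N then b i else 0 := by
    intro N i
    simp [hP, Polynomial.finsetSum_coeff, Polynomial.coeff_monomial]
  have heval : ∀ N z, (P N).eval z = ∑ n ∈ Finset.range N, b n * z ^ n := by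
    intro N z
    simp [hP, Polynomial.eval_finsetSum]
  have h1 : ∀ N, ∑ n ∈ Finset.range N, ‖b n‖^2 = (2 * π)⁻¹ * ∫ φ in (0:ℝ)..(2*π), 
      ‖∑ n ∈ Finset.range N, b n * Complex.exp (φ * Complex.I) ^ n‖ ^ 2 := by
    intro N
    have := (P N).sum_sq_norm_coeff_eq_circleAverage
    simp only [Real.circleAverage, heval, circleMap, smul_eq_mul] at this
    simp only [Complex.ofReal_one, zero_add, one_mul] at this
    rw [← this]
    symm
    rw [Finset.sum_subset (s₂ := Finset.range N)]
    · apply Finset.sum_congr rfl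
      intro i hi
      rw [hcoef, if_pos (Finset.mem_range.1 hi)]
    · intro i hi
      by_contra hh
      have := hcoef N i
      rw [if_neg (by simpa using hh)] at this
      exact (Polynomial.mem_support_iff.1 hi) this
    · intro i _ hi
      simp [Polynomial.notMem_support_iff.1 hi]
  simp_rw [h1]
  apply Filter.Tendsto.const_mul
  apply intervalIntegral.tendsto_integral_filter_of_dominated_convergence (fun _ => (∑' n, ‖b n‖)^2)
  · refine Filter.Eventually.of_forall fun N => ?_
    apply Continuous.aestronglyMeasurable
    fun_prop
  · refine Filter.Eventually.of_forall fun N => Filter.Eventually.of_forall fun φ _ => ?_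
    rw [norm_pow, norm_norm]
    gcongr
    refine (norm_sum_le _ _).trans ?_
    refine le_trans (le_of_eq ?_) (hb.sum_le_tsum (Finset.range N) (fun _ _ => norm_nonneg _))
    apply Finset.sum_congr rfl
    intro n _
    rw [norm_mul, norm_pow, Complex.norm_exp_ofReal_mul_I, one_pow, mul_one]
  · exact intervalIntegrable_const
  · refine Filter.Eventually.of_forall fun φ _ => ?_
    exact ((hG φ).tendsto_sum_nat.norm).pow 2


lemma aux_mem (r : ℝ) (h0 : 0 ≤ r) (h1 : r ≤ 1) (φ : ℝ) : 
    (r : ℂ) * Complex.exp (φ * Complex.I) ∈ Metric.closedBall (0:ℂ) 1 := by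
  simp [Complex.norm_exp_ofReal_mul_I, abs_of_nonneg h0, h1]

lemma aux_mem' (r : ℝ) (h0 : 0 ≤ r) (h1 : r < 1) (φ : ℝ) : 
    (r : ℂ) * Complex.exp (φ * Complex.I) ∈ Metric.ball (0:ℂ) 1 := by
  simp [Complex.norm_exp_ofReal_mul_I, abs_of_nonneg h0, h1]

lemma aux_cont (k : ℂ → ℝ) (hk : ContinuousOn k (Metric.closedBall 0 1)) 
    (r : ℝ) (h0 : 0 ≤ r) (h1 : r ≤ 1) : 
    Continuous (fun φ : ℝ => k (r * Complex.exp (φ * Complex.I))) := 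
  hk.comp_continuous (by fun_prop) (aux_mem r h0 h1)

lemma aux_polar (k : ℂ → ℝ) (hk : ContinuousOn k (Metric.closedBall 0 1)) :
    ∫⁻ z in Metric.ball (0:ℂ) 1, ENNReal.ofReal (k z ^ 2) = 
    ∫⁻ ρ in Ioo (0:ℝ) 1, ENNReal.ofReal 
      (ρ * ∫ φ in (0:ℝ)..(2*π), k (ρ * Complex.exp (φ * Complex.I)) ^ 2) := by
  have hm : Measurable ((Metric.ball (0:ℂ) 1).indicator (fun z => ENNReal.ofReal (k z ^ 2))) := by
    classical
    rw [← Set.piecewise_eq_indicator]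
    apply ContinuousOn.measurable_piecewise
    · exact ENNReal.continuous_ofReal.comp_continuousOn ((hk.mono Metric.ball_subset_closedBall).pow 2)
    · exact continuousOn_const
    · exact measurableSet_ball
  rw [← lintegral_indicator measurableSet_ball, ← Complex.lintegral_comp_polarCoord_symm]
  rw [polarCoord_target, Measure.volume_eq_prod, setLIntegral_prod]
  swap
  · apply Measurable.aemeasurable
    simp only [Complex.polarCoord_symm_apply, smul_eq_mul]
    apply Measurable.mul (by fun_prop)
    apply hm.comp
    fun_prop
  have : Ioi (0:ℝ) = Ioo 0 1 ∪ Ici 1 := (Ioo_union_Ici_eq_Ioi zero_lt_one).symm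
  rw [this, lintegral_union measurableSet_Ici 
    (by rw [Set.disjoint_left]; intro x hx hx'; exact absurd hx.2 (not_lt.2 hx'))]
  have h2 : ∀ ρ θ : ℝ, Complex.polarCoord.symm (ρ, θ) = ρ * Complex.exp (θ * Complex.I) := by
    intro ρ θ
    rw [Complex.polarCoord_symm_apply, Complex.exp_mul_I]; simp
  simp only [h2]
  rw [setLIntegral_congr_fun (s := Ici (1:ℝ)) (g := fun _ => 0) measurableSet_Ici]
  · simp only [lintegral_zero, add_zero]
    apply setLIntegral_congr_fun measurableSet_Ioo
    intro ρ hρ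
    simp only [smul_eq_mul]
    have hc := (aux_cont k hk ρ hρ.1.le hρ.2.le).pow 2
    have hper : Function.Periodic (fun φ : ℝ => k (ρ * Complex.exp (φ * Complex.I)) ^ 2) (2*π) := by
      intro φ
      simp only
      congr 3
      push_cast
      rw [add_mul, Complex.exp_add, Complex.exp_two_pi_mul_I, mul_one]
    have e1 := hper.intervalIntegral_add_eq 0 (-π)
    rw [zero_add, show -π + 2 * π = π by ring] at e1
    rw [e1, intervalIntegral.integral_of_le (by linarith [pi_pos]), 
      integral_Ioc_eq_integral_Ioo, ENNReal.ofReal_mul hρ.1.le, ofReal_integral_eq_lintegral_ofReal]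
    · rw [← lintegral_const_mul]
      · apply lintegral_congr
        intro θ
        rw [Set.indicator_of_mem (aux_mem' ρ hρ.1.le hρ.2 θ)]
      · exact (ENNReal.continuous_ofReal.comp hc).measurable
    · exact (hc.integrableOn_Icc (a := -π) (b := π)).mono_set Ioo_subset_Icc_self
    · exact Filter.Eventually.of_forall fun _ => sq_nonneg _
  · intro ρ hρ
    simp only
    convert lintegral_zero with θ
    rw [Set.indicator_of_notMem]
    · simp
    · have : (0:ℝ) ≤ ρ := zero_le_one.trans hρ
      simp only [Metric.mem_ball, dist_zero_right, norm_mul, Complex.norm_exp_ofReal_mul_I, 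
        Complex.norm_real, norm_eq_abs, abs_of_nonneg this, mul_one, not_lt]
      exact hρ

lemma aux_sq (a : ℕ → ℂ) (x S : ℂ) (h : HasSum (fun n => a n * x ^ n) S) :
    HasSum (fun n => (∑ p ∈ Finset.HasAntidiagonal.antidiagonal n, a p.1 * a p.2) * x ^ n) 
      (S ^ 2) := by
  have h4 : Summable (fun n => ‖a n * x ^ n‖) := summable_norm_iff.2 h.summable
  have h5 := (summable_norm_sum_mul_antidiagonal_of_summable_norm h4 h4).of_norm.hasSum
  rw [← tsum_mul_tsum_eq_tsum_sum_antidiagonal_of_summable_norm h4 h4, h.tsum_eq, ← sq] at h5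
  have e : (fun n => (∑ p ∈ Finset.HasAntidiagonal.antidiagonal n, a p.1 * a p.2) * x ^ n) = 
      fun n => ∑ p ∈ Finset.HasAntidiagonal.antidiagonal n, (a p.1 * x ^ p.1) * (a p.2 * x ^ p.2) := by
    ext n
    rw [Finset.sum_mul]
    apply Finset.sum_congr rfl
    intro p hp
    rw [← Finset.HasAntidiagonal.mem_antidiagonal.1 hp, pow_add]; ring
  rw [e]
  exact h5

set_option maxHeartbeats 1000000 in
lemma aux_carleman (g : ℂ → ℂ) (hg : DifferentiableOn ℂ g (Metric.ball 0 1))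
    (k : ℂ → ℝ) (hk : ContinuousOn k (Metric.closedBall 0 1))
    (hgk : ∀ z ∈ Metric.ball (0:ℂ) 1, ‖g z‖ ^ 2 = k z) :
    ∫ z in Metric.ball (0:ℂ) 1, k z ^ 2 ≤ 
      (1 / (4 * π)) * (∫ φ in (0:ℝ)..(2*π), k (Complex.exp (φ * Complex.I))) ^ 2 := by
  obtain ⟨a, ha⟩ : ∃ a : ℕ → ℂ, ∀ z ∈ Metric.ball (0:ℂ) 1, HasSum (fun n => a n * z ^ n) (g z) := by
    refine ⟨fun n => (n.factorial : ℂ)⁻¹ * iteratedDeriv n g 0, fun z hz => ?_⟩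
    have e : (fun n : ℕ => (n.factorial : ℂ)⁻¹ * iteratedDeriv n g 0 * z ^ n) = 
        fun n : ℕ => (n.factorial : ℂ)⁻¹ • (z - 0) ^ n • iteratedDeriv n g 0 := by
      ext n
      simp only [sub_zero, smul_eq_mul]
      ring
    rw [e]
    exact Complex.hasSum_taylorSeries_on_ball hg hz
  set I₁ := ∫ φ in (0:ℝ)..(2*π), k (Complex.exp (φ * Complex.I)) with hI₁
  have hab : ∀ r : ℝ, 0 ≤ r → r < 1 → Summable (fun n => ‖a n * (r:ℂ) ^ n‖) := by
    intro r h0 h1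
    have := (ha r (by simpa [abs_of_nonneg h0] using h1)).summable
    exact summable_norm_iff.2 this
  have hpars : ∀ r : ℝ, 0 ≤ r → r < 1 → HasSum (fun n => ‖a n * (r:ℂ) ^ n‖ ^ 2) 
      ((2*π)⁻¹ * ∫ φ in (0:ℝ)..(2*π), k (r * Complex.exp (φ * Complex.I))) := by
    intro r h0 h1
    have := aux_parseval _ (hab r h0 h1) (fun φ => g (r * Complex.exp (φ * Complex.I))) (by
      intro φ
      convert ha _ (aux_mem' r h0 h1 φ) using 2 with n
      rw [mul_pow]; ring)
    convert this using 4 with φ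
    rw [hgk _ (aux_mem' r h0 h1 φ)]
  obtain ⟨C, hC⟩ := (isCompact_closedBall (0:ℂ) 1).exists_bound_of_continuousOn hk
  have hlim : Filter.Tendsto (fun r : ℝ => ∫ φ in (0:ℝ)..(2*π), k (r * Complex.exp (φ * Complex.I))) 
      (nhdsWithin 1 (Iio 1)) (nhds I₁) := by
    have hmem : Ioo (0:ℝ) 1 ∈ nhdsWithin (1:ℝ) (Iio 1) := Ioo_mem_nhdsLT zero_lt_one
    apply intervalIntegral.tendsto_integral_filter_of_dominated_convergence (fun _ => C)
    · filter_upwards [hmem] with r hr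
      exact (aux_cont k hk r hr.1.le hr.2.le).aestronglyMeasurable
    · filter_upwards [hmem] with r hr
      exact Filter.Eventually.of_forall fun φ _ => hC _ (aux_mem r hr.1.le hr.2.le φ)
    · exact intervalIntegrable_const
    · refine Filter.Eventually.of_forall fun φ _ => ?_
      have h1 : ContinuousWithinAt k (Metric.closedBall 0 1) (Complex.exp (φ * Complex.I)) := 
        hk _ (by simpa using aux_mem 1 zero_le_one le_rfl φ)
      refine h1.tendsto.comp ?_
      refine tendsto_nhdsWithin_iff.2 ⟨?_, ?_⟩
      · have : Continuous (fun r : ℝ => (r:ℂ) * Complex.exp (φ * Complex.I)) := by fun_prop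
        have := (this.tendsto 1).mono_left (nhdsWithin_le_nhds (s := Iio 1))
        simpa using this
      · filter_upwards [hmem] with r hr
        exact aux_mem r hr.1.le hr.2.le φ
  have hpartial : ∀ N, ∑ n ∈ Finset.range N, ‖a n‖^2 ≤ (2*π)⁻¹ * I₁ := by
    intro N
    have hmem : Ioo (0:ℝ) 1 ∈ nhdsWithin (1:ℝ) (Iio 1) := Ioo_mem_nhdsLT zero_lt_one
    have hl : Filter.Tendsto (fun r : ℝ => ∑ n ∈ Finset.range N, ‖a n * (r:ℂ)^n‖^2) 
        (nhdsWithin 1 (Iio 1)) (nhds (∑ n ∈ Finset.range N, ‖a n‖^2)) := by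
      have : Continuous (fun r : ℝ => ∑ n ∈ Finset.range N, ‖a n * (r:ℂ)^n‖^2) := by fun_prop
      have := (this.tendsto 1).mono_left (nhdsWithin_le_nhds (s := Iio 1))
      simpa using this
    refine le_of_tendsto_of_tendsto hl (hlim.const_mul _) ?_
    filter_upwards [hmem] with r hr
    exact sum_le_hasSum _ (fun _ _ => sq_nonneg _) (hpars r hr.1.le hr.2)
  have hsumA : Summable (fun n => ‖a n‖^2) := 
    summable_of_sum_range_le (fun _ => sq_nonneg _) hpartial
  have hA : ∑' n, ‖a n‖^2 ≤ (2*π)⁻¹ * I₁ := hsumA.tsum_le_of_sum_range_le hpartial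
  have hA0 : 0 ≤ ∑' n, ‖a n‖^2 := tsum_nonneg fun _ => sq_nonneg _
  -- product coefficients
  set c : ℕ → ℂ := fun n => ∑ p ∈ Finset.HasAntidiagonal.antidiagonal n, a p.1 * a p.2 with hc
  set d : ℕ → ℝ := fun n => ∑ p ∈ Finset.HasAntidiagonal.antidiagonal n, ‖a p.1‖^2 * ‖a p.2‖^2 with hd
  have hsumA' : Summable (fun n => ‖(‖a n‖^2)‖) := by simpa using hsumA
  have hdsum : Summable d := by
    have := summable_norm_sum_mul_antidiagonal_of_summable_norm hsumA' hsumA'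
    exact this.of_norm
  have hdt : ∑' n, d n = (∑' n, ‖a n‖^2) ^ 2 := by
    rw [sq, tsum_mul_tsum_eq_tsum_sum_antidiagonal_of_summable_norm hsumA' hsumA']
  have hcd : ∀ n : ℕ, ‖c n‖^2 / (n+1) ≤ d n := by
    intro n
    rw [div_le_iff₀ (by positivity)]
    calc ‖c n‖^2 ≤ (∑ p ∈ Finset.HasAntidiagonal.antidiagonal n, ‖a p.1 * a p.2‖)^2 := by
          gcongr; exact norm_sum_le _ _
      _ ≤ (Finset.HasAntidiagonal.antidiagonal n).card * ∑ p ∈ Finset.HasAntidiagonal.antidiagonal n, ‖a p.1 * a p.2‖^2 := 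
          sq_sum_le_card_mul_sum_sq
      _ = d n * (n+1) := by
          rw [Finset.Nat.card_antidiagonal, mul_comm, hd]
          push_cast
          simp only [norm_mul, mul_pow]
  have hcpars : ∀ r : ℝ, 0 ≤ r → r < 1 → HasSum (fun n => ‖c n * (r:ℂ) ^ n‖ ^ 2) 
      ((2*π)⁻¹ * ∫ φ in (0:ℝ)..(2*π), k (r * Complex.exp (φ * Complex.I)) ^ 2) := by
    intro r h0 h1
    have hs : Summable (fun n => ‖c n * (r:ℂ)^n‖) := 
      summable_norm_iff.2 (aux_sq a r _ (ha r (by simpa [abs_of_nonneg h0] using h1))).summable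
    have := aux_parseval _ hs (fun φ => g (r * Complex.exp (φ * Complex.I)) ^ 2) (by
      intro φ
      have h3 := aux_sq a _ _ (ha _ (aux_mem' r h0 h1 φ))
      simp only [mul_pow, ← mul_assoc] at h3
      exact h3)
    convert this using 4 with φ
    rw [← hgk _ (aux_mem' r h0 h1 φ), norm_pow]
  have hfin : ∫⁻ z in Metric.ball (0:ℂ) 1, ENNReal.ofReal (k z ^ 2) ≤ 
      ENNReal.ofReal ((1 / (4 * π)) * I₁ ^ 2) := by
    rw [aux_polar k hk]
    have e1 : ∀ ρ ∈ Ioo (0:ℝ) 1, ENNReal.ofReal 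
      (ρ * ∫ φ in (0:ℝ)..(2*π), k (ρ * Complex.exp (φ * Complex.I)) ^ 2) = 
        ∑' n, ENNReal.ofReal (2 * π * ‖c n‖^2 * ρ ^ (2 * n + 1)) := by
      intro ρ hρ
      have h1 := (hcpars ρ hρ.1.le hρ.2).mul_left (2 * π * ρ)
      have h2 : (fun n => 2 * π * ρ * ‖c n * (ρ:ℂ) ^ n‖ ^ 2) = 
          fun n => 2 * π * ‖c n‖^2 * ρ ^ (2 * n + 1) := by
        ext n
        rw [norm_mul, norm_pow, Complex.norm_real, Real.norm_of_nonneg hρ.1.le]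
        ring
      rw [h2, ← mul_assoc, show 2 * π * ρ * (2 * π)⁻¹ = ρ by have := pi_pos; field_simp] at h1
      rw [← h1.tsum_eq, ENNReal.ofReal_tsum_of_nonneg _ h1.summable]
      intro n
      have := hρ.1
      positivity
    rw [setLIntegral_congr_fun measurableSet_Ioo e1, lintegral_tsum]
    swap
    · intro n
      apply Measurable.aemeasurable
      fun_prop
    have e2 : ∀ n : ℕ, ∫⁻ ρ in Ioo (0:ℝ) 1, ENNReal.ofReal (2 * π * ‖c n‖^2 * ρ ^ (2 * n + 1)) = 
        ENNReal.ofReal (π * (‖c n‖^2 / (n+1))) := by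
      intro n
      rw [← ofReal_integral_eq_lintegral_ofReal]
      · congr 1
        rw [← integral_Ioc_eq_integral_Ioo, ← intervalIntegral.integral_of_le zero_le_one]
        rw [intervalIntegral.integral_const_mul, integral_pow]
        push_cast
        simp
        field_simp
        ring
      · have : Continuous (fun ρ : ℝ => 2 * π * ‖c n‖^2 * ρ ^ (2 * n + 1)) := by fun_prop
        exact this.integrableOn_Icc.mono_set Ioo_subset_Icc_self
      · filter_upwards [ae_restrict_mem measurableSet_Ioo] with ρ hρ
        have := hρ.1
        simp only [Pi.zero_apply]
        positivity
    simp_rw [e2]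
    calc ∑' n : ℕ, ENNReal.ofReal (π * (‖c n‖^2 / (n+1))) 
        ≤ ∑' n, ENNReal.ofReal (π * d n) := by
          apply ENNReal.tsum_le_tsum
          intro n
          apply ENNReal.ofReal_le_ofReal
          exact mul_le_mul_of_nonneg_left (hcd n) pi_pos.le
      _ = ENNReal.ofReal (π * ∑' n, d n) := by
          rw [← tsum_mul_left, ENNReal.ofReal_tsum_of_nonneg]
          · intro n
            rw [hd]
            positivity
          · exact hdsum.mul_left _
      _ ≤ _ := by
          apply ENNReal.ofReal_le_ofReal
          rw [hdt]
          have : (∑' n, ‖a n‖^2)^2 ≤ ((2*π)⁻¹ * I₁)^2 := by gcongr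
          calc π * (∑' n, ‖a n‖^2)^2 ≤ π * ((2*π)⁻¹ * I₁)^2 := by gcongr
            _ = _ := by field_simp; ring
  rw [integral_eq_lintegral_of_nonneg_ae]
  · exact ENNReal.toReal_le_of_le_ofReal (by positivity) hfin
  · exact Filter.Eventually.of_forall fun _ => sq_nonneg _
  · exact ((hk.mono Metric.ball_subset_closedBall).pow 2).aestronglyMeasurable measurableSet_ball

lemma aux_memLp (f : ℂ → ℝ) (hf : ContinuousOn f (Metric.closedBall 0 1)) :
    MemLp f (ENNReal.ofReal 2) (volume.restrict (Metric.ball (0:ℂ) 1)) := by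
  obtain ⟨C, hC⟩ := (isCompact_closedBall (0:ℂ) 1).exists_bound_of_continuousOn hf
  haveI : IsFiniteMeasure (volume.restrict (Metric.ball (0:ℂ) 1)) := 
    ⟨by rw [Measure.restrict_apply_univ]; exact measure_ball_lt_top⟩
  refine MemLp.of_bound ((hf.mono Metric.ball_subset_closedBall).aestronglyMeasurable 
    measurableSet_ball) C ?_
  filter_upwards [ae_restrict_mem measurableSet_ball] with z hz
  exact hC z (Metric.ball_subset_closedBall hz)

theorem stmt_3 (F : ℂ → ℂ) (U : Set ℂ) (hU : IsOpen U)
    (hUD : Metric.closedBall (0 : ℂ) 1 ⊆ U)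
    (hF : DifferentiableOn ℂ F U)
    (hFinj : Set.InjOn F (Metric.closedBall (0 : ℂ) 1))
    (Ω : Set ℂ) (hΩ : Ω = F '' (Metric.ball (0 : ℂ) 1))
    (u : ℂ → ℂ)
    (hu : DifferentiableOn ℂ u Ω)
    (hucont : ContinuousOn u (F '' (Metric.closedBall (0 : ℂ) 1))) :
    ∫ z in Metric.ball (0 : ℂ) 1, ‖u (F z)‖^2 * ‖deriv F z‖^2
      ≤ (1/2) * Real.sqrt ((∫ z in Metric.ball (0 : ℂ) 1, ‖deriv F z‖^2) / π) *
        ∫ φ in (0:ℝ)..(2*π),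
          ‖u (F (Complex.exp (φ * Complex.I)))‖^2 * ‖deriv F (Complex.exp (φ * Complex.I))‖ := by
  have hBU : Metric.ball (0:ℂ) 1 ⊆ U := Metric.ball_subset_closedBall.trans hUD
  have hFB : DifferentiableOn ℂ F (Metric.ball 0 1) := hF.mono hBU
  have hne : ∀ z ∈ Metric.ball (0:ℂ) 1, deriv F z ≠ 0 := fun z hz =>
    aux_deriv_ne_zero F _ Metric.isOpen_ball hFB (hFinj.mono Metric.ball_subset_closedBall) z hz
  obtain ⟨p, hp, hpF⟩ := aux_sqrt (deriv F) (hFB.deriv Metric.isOpen_ball) hne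
  have hdc : ContinuousOn (fun z => ‖deriv F z‖) (Metric.closedBall 0 1) :=
    ((hF.deriv hU).continuousOn.mono hUD).norm
  set k : ℂ → ℝ := fun z => ‖u (F z)‖^2 * ‖deriv F z‖ with hk
  have hkc : ContinuousOn k (Metric.closedBall 0 1) := 
    ((hucont.comp (hF.continuousOn.mono hUD) (mapsTo_image _ _)).norm.pow 2).mul hdc
  have hg : DifferentiableOn ℂ (fun z => u (F z) * p z) (Metric.ball 0 1) := by
    refine DifferentiableOn.mul (hu.comp hFB ?_) hp
    rw [hΩ]; exact mapsTo_image _ _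
  have hcar := aux_carleman _ hg k hkc (fun z hz => by
    rw [hk, norm_mul, mul_pow, ← norm_pow (p z), hpF z hz])
  set J := ∫ φ in (0:ℝ)..(2*π), k (Complex.exp (φ * Complex.I)) with hJ
  have hJ0 : 0 ≤ J := intervalIntegral.integral_nonneg (by positivity) 
    (fun φ _ => by rw [hk]; positivity)
  have hcs := integral_mul_le_Lp_mul_Lq_of_nonneg (μ := volume.restrict (Metric.ball (0:ℂ) 1))
    (Real.HolderConjugate.two_two)
    (f := k) (g := fun z => ‖deriv F z‖)
    (Filter.Eventually.of_forall fun z => by simp only [hk, Pi.zero_apply]; positivity)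
    (Filter.Eventually.of_forall fun z => norm_nonneg _) (aux_memLp _ hkc) (aux_memLp _ hdc)
  simp only [Real.rpow_two, ← Real.sqrt_eq_rpow] at hcs
  set A := ∫ z in Metric.ball (0 : ℂ) 1, ‖deriv F z‖^2 with hA
  have e1 : ∫ z in Metric.ball (0 : ℂ) 1, ‖u (F z)‖^2 * ‖deriv F z‖^2 = 
      ∫ z in Metric.ball (0 : ℂ) 1, k z * ‖deriv F z‖ := by
    congr 1; ext z; simp only [hk]; ring
  rw [e1]
  refine hcs.trans ?_
  have e2 : √(∫ z in Metric.ball (0 : ℂ) 1, k z ^ 2) ≤ J / (2 * √π) := by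
    apply Real.sqrt_le_iff.2
    refine ⟨by positivity, hcar.trans (le_of_eq ?_)⟩
    rw [div_pow, mul_pow, Real.sq_sqrt pi_pos.le]
    ring
  calc _ ≤ J / (2 * √π) * √A := by gcongr
    _ = _ := by rw [Real.sqrt_div' _ pi_pos.le]; ring
end

section
/- Let m ≥ 0 and Λ > 0, let μ : (0, ∞) → ℝ be continuous and strictly increasing with range exactly (0, Λ), and suppose the function a ↦ μ(a)/a is strictly decreasing on (0, ∞). Let ϑ(θ) = (1 − sin θ)/cos θ for θ ∈ (−π/2, π/2), and let f : (0, ∞) → (−π/2, π/2) be a function satisfying ϑ(f(a)) = a/(√(μ(a) + m²) + m) for all a > 0. Then f is continuous, strictly decreasing, and bijective from (0, ∞) onto (−π/2, π/2). -/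
open Real Set

theorem arctan_vartheta {θ : ℝ} (h : θ ∈ Ioo (-(π/2)) (π/2)) :
    θ = π/2 - 2 * Real.arctan (vartheta θ) := by
  obtain ⟨h1, h2⟩ := h
  have hpi := Real.pi_pos
  obtain ⟨φ, hφ⟩ : ∃ φ, φ = π/4 - θ/2 := ⟨_, rfl⟩
  have e : θ = π/2 - 2*φ := by rw [hφ]; ring
  have p0 : 0 < φ := by linarith
  have p1 : φ < π/2 := by linarith
  have hs : 0 < Real.sin φ := Real.sin_pos_of_pos_of_lt_pi p0 (by linarith)
  have hc : 0 < Real.cos φ := Real.cos_pos_of_mem_Ioo ⟨by linarith, p1⟩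
  have hv : vartheta θ = Real.tan φ := by
    unfold vartheta
    rw [e, Real.sin_pi_div_two_sub, Real.cos_pi_div_two_sub, Real.sin_two_mul, Real.cos_two_mul,
      Real.tan_eq_sin_div_cos, div_eq_div_iff (by positivity) hc.ne']
    have := Real.sin_sq_add_cos_sq φ
    linear_combination (-2 * Real.cos φ) * this
  rw [hv, Real.arctan_tan (by linarith) p1]
  exact e

/-- Abstract form of Lemma 3.4: the function `f` with
`ϑ(f(a)) = a/(√(μ(a)+m²)+m)` is continuous, strictly decreasing, and bijective from
`(0,∞)` onto `(−π/2, π/2)`. -/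
theorem stmt_7 (m Λ : ℝ) (hm : 0 ≤ m) (hΛ : 0 < Λ)
    (μ : ℝ → ℝ)
    (hμcont : ContinuousOn μ (Ioi 0))
    (hμmono : StrictMonoOn μ (Ioi 0))
    (hμrange : μ '' (Ioi 0) = Ioo 0 Λ)
    (hquot : StrictAntiOn (fun a => μ a / a) (Ioi 0))
    (f : ℝ → ℝ)
    (hfmaps : ∀ a ∈ Ioi (0:ℝ), f a ∈ Ioo (-(π/2)) (π/2))
    (hf : ∀ a ∈ Ioi (0:ℝ), vartheta (f a) = a / (Real.sqrt (μ a + m^2) + m)) :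
    ContinuousOn f (Ioi 0) ∧ StrictAntiOn f (Ioi 0) ∧
      Set.BijOn f (Ioi 0) (Ioo (-(π/2)) (π/2)) := by
  have hμ : ∀ a, 0 < a → 0 < μ a ∧ μ a < Λ := fun a ha => by
    have : μ a ∈ Ioo 0 Λ := hμrange ▸ mem_image_of_mem μ (mem_Ioi.2 ha)
    exact this
  obtain ⟨g, hg⟩ : ∃ g : ℝ → ℝ, g = fun a => a / (Real.sqrt (μ a + m^2) + m) := ⟨_, rfl⟩
  have hD : ∀ a, 0 < a → 0 < Real.sqrt (μ a + m^2) := fun a ha => by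
    have := (hμ a ha).1
    positivity
  have hfg : ∀ a ∈ Ioi (0:ℝ), f a = π/2 - 2 * Real.arctan (g a) := fun a ha => by
    rw [hg]
    show f a = π/2 - 2 * Real.arctan (a / (Real.sqrt (μ a + m^2) + m))
    rw [← hf a ha]
    exact arctan_vartheta (hfmaps a ha)
  have hgc : ContinuousOn g (Ioi 0) := by
    rw [hg]
    refine continuousOn_id.div ?_ ?_
    · exact ((hμcont.add continuousOn_const).sqrt).add continuousOn_const
    · intro a ha
      have := hD a ha
      positivity
  have hgm : StrictMonoOn g (Ioi 0) := by
    intro a ha b hb hab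
    have ha' : 0 < a := ha
    have hb' : 0 < b := hb
    have h1 := hD a ha
    have h2 := hD b hb
    have q : μ b / b < μ a / a := hquot ha hb hab
    rw [div_lt_div_iff₀ hb' ha'] at q
    have m1 := (hμ a ha).1
    have m2 := (hμ b hb).1
    rw [hg]
    show a / (Real.sqrt (μ a + m^2) + m) < b / (Real.sqrt (μ b + m^2) + m)
    rw [div_lt_div_iff₀ (by positivity) (by positivity)]
    have key : a * Real.sqrt (μ b + m^2) < b * Real.sqrt (μ a + m^2) := by
      apply lt_of_pow_lt_pow_left₀ 2 (by positivity)
      rw [mul_pow, mul_pow, Real.sq_sqrt (by positivity), Real.sq_sqrt (by positivity)]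
      have e1 : a * (μ b * a) < a * (μ a * b) := mul_lt_mul_of_pos_left q ha'
      have e2 : a * (μ a * b) ≤ b * (μ a * b) := mul_le_mul_of_nonneg_right hab.le (by positivity)
      have e3 : a^2 * m^2 ≤ b^2 * m^2 := by gcongr
      nlinarith
    nlinarith [mul_le_mul_of_nonneg_right hab.le hm]
  have hsurj : ∀ c, 0 < c → ∃ a ∈ Ioi (0:ℝ), g a = c := by
    intro c hc
    have hlow : ∃ a ∈ Ioi (0:ℝ), g a ≤ c := by
      have k := (hμ 1 one_pos).1
      obtain ⟨a, ha⟩ : ∃ a, a = min 1 (μ 1 * c^2) := ⟨_, rfl⟩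
      have a0 : 0 < a := by rw [ha]; positivity
      have a1 : a ≤ 1 := by rw [ha]; exact min_le_left _ _
      have a2 : a ≤ μ 1 * c^2 := by rw [ha]; exact min_le_right _ _
      refine ⟨a, a0, ?_⟩
      have q : μ 1 / 1 ≤ μ a / a := hquot.antitoneOn (mem_Ioi.2 a0) (mem_Ioi.2 one_pos) a1
      rw [div_one, le_div_iff₀ a0] at q
      have h1 := hD a a0
      rw [hg]
      show a / (Real.sqrt (μ a + m^2) + m) ≤ c
      rw [div_le_iff₀ (by positivity)]
      have : a ≤ c * Real.sqrt (μ a + m^2) := by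
        refine (sq_le_sq₀ a0.le (by positivity)).1 ?_
        rw [mul_pow, Real.sq_sqrt (by have := (hμ a a0).1; positivity)]
        have e1 := mul_le_mul_of_nonneg_left a2 a0.le
        have e2 := mul_le_mul_of_nonneg_left q (sq_nonneg c)
        nlinarith [mul_nonneg (sq_nonneg c) (sq_nonneg m)]
      nlinarith [mul_nonneg hc.le hm]
    have hhigh : ∃ a ∈ Ioi (0:ℝ), c ≤ g a := by
      have K : 0 < Real.sqrt (Λ + m^2) := by positivity
      have a0 : 0 < c * (Real.sqrt (Λ + m^2) + m) := by positivity
      refine ⟨_, a0, ?_⟩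
      have h1 := hD _ a0
      have h2 := (hμ _ a0).2
      rw [hg]
      show c ≤ _ / _
      rw [le_div_iff₀ (by positivity)]
      gcongr
    obtain ⟨a, ha, h1⟩ := hlow
    obtain ⟨b, hb, h2⟩ := hhigh
    exact isPreconnected_Ioi.intermediate_value ha hb hgc ⟨h1, h2⟩
  have hanti : StrictAntiOn f (Ioi 0) := by
    intro a ha b hb hab
    rw [hfg a ha, hfg b hb]
    have := Real.arctan_strictMono (hgm ha hb hab)
    linarith
  refine ⟨?_, hanti, hfmaps, hanti.injOn, ?_⟩
  · refine ContinuousOn.congr ?_ hfg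
    exact continuousOn_const.sub
      (continuousOn_const.mul (Real.continuous_arctan.comp_continuousOn hgc))
  · intro θ hθ
    have hc : 0 < vartheta θ := by
      have h1 : 0 < Real.arctan (vartheta θ) := by
        have := arctan_vartheta hθ
        have := hθ.2
        linarith
      exact Real.arctan_pos.1 h1
    obtain ⟨a, ha, h⟩ := hsurj _ hc
    refine ⟨a, ha, ?_⟩
    rw [hfg a ha, h]
    exact (arctan_vartheta hθ).symm
end

section
/- Let m ≥ 0 and Λ > 0, let μ : (0, ∞) → ℝ be continuous and strictly increasing with range exactly (0, Λ), and suppose a ↦ μ(a)/a is strictly decreasing on (0, ∞). Let ϑ(θ) = (1 − sin θ)/cos θ for θ ∈ (−π/2, π/2), let f : (0, ∞) → (−π/2, π/2) satisfy ϑ(f(a)) = a/(√(μ(a) + m²) + m) for all a > 0, and let λ : (−π/2, π/2) → ℝ satisfy λ(f(a)) = √(μ(a) + m²) for all a > 0. Then λ is continuous, strictly decreasing, and bijective from (−π/2, π/2) onto (m, √(Λ + m²)). -/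
open Real Set

/-- Abstract form of Proposition 3.5: the first Dirac eigenvalue curve `λ`, determined by
`λ(f(a)) = √(μ(a)+m²)` with `ϑ(f(a)) = a/(√(μ(a)+m²)+m)`, is continuous, strictly
decreasing, and bijective from `(−π/2, π/2)` onto `(m, √(Λ+m²))`. -/
theorem stmt_8 (m Λ : ℝ) (hm : 0 ≤ m) (hΛ : 0 < Λ)
    (μ : ℝ → ℝ)
    (hμcont : ContinuousOn μ (Ioi 0))
    (hμmono : StrictMonoOn μ (Ioi 0))
    (hμrange : μ '' (Ioi 0) = Ioo 0 Λ)
    (hquot : StrictAntiOn (fun a => μ a / a) (Ioi 0))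
    (f : ℝ → ℝ)
    (hfmaps : ∀ a ∈ Ioi (0:ℝ), f a ∈ Ioo (-(π/2)) (π/2))
    (hf : ∀ a ∈ Ioi (0:ℝ), vartheta (f a) = a / (Real.sqrt (μ a + m^2) + m))
    (lam : ℝ → ℝ)
    (hlam : ∀ a ∈ Ioi (0:ℝ), lam (f a) = Real.sqrt (μ a + m^2)) :
    ContinuousOn lam (Ioo (-(π/2)) (π/2)) ∧ StrictAntiOn lam (Ioo (-(π/2)) (π/2)) ∧
      Set.BijOn lam (Ioo (-(π/2)) (π/2)) (Ioo m (Real.sqrt (Λ + m^2))) := by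
  have hμpos : ∀ a, 0 < a → 0 < μ a ∧ μ a < Λ := by
    intro a ha
    have : μ a ∈ Ioo 0 Λ := hμrange ▸ mem_image_of_mem μ ha
    exact this
  set s : ℝ → ℝ := fun a => Real.sqrt (μ a + m^2) with hs
  have hsq : ∀ a, 0 < a → s a ^ 2 = μ a + m^2 := by
    intro a ha
    exact Real.sq_sqrt (by have := (hμpos a ha).1; positivity)
  have hs0 : ∀ a, 0 ≤ s a := fun a => Real.sqrt_nonneg _
  have hsm : ∀ a, 0 < a → m < s a := by
    intro a ha
    have h1 := hsq a ha
    have h2 := (hμpos a ha).1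
    have h3 := hs0 a
    nlinarith
  have hsΛ : ∀ a, 0 < a → s a < Real.sqrt (Λ + m^2) := by
    intro a ha
    have h2 := hμpos a ha
    exact Real.sqrt_lt_sqrt (by nlinarith) (by linarith)
  have hsmono : ∀ a b, 0 < a → a < b → s a < s b := by
    intro a b ha hab
    have h2 := hμpos a ha
    have h3 := hμmono (show a ∈ Ioi 0 from ha) (show b ∈ Ioi 0 from ha.trans hab) hab
    exact Real.sqrt_lt_sqrt (by nlinarith) (by linarith)
  have hq : ∀ a b, 0 < a → a < b → μ b * a < μ a * b := by
    intro a b ha hab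
    have h3 := hquot (show a ∈ Ioi 0 from ha) (show b ∈ Ioi 0 from ha.trans hab) hab
    exact (div_lt_div_iff₀ (ha.trans hab) ha).1 h3
  have hden : ∀ a, 0 < a → 0 < s a + m := fun a ha => by linarith [hsm a ha]
  set g : ℝ → ℝ := fun a => a / (s a + m) with hg
  have hgmono : ∀ a b, 0 < a → a < b → g a < g b := by
    intro a b ha hab
    have hb := ha.trans hab
    rw [hg]
    show a / (s a + m) < b / (s b + m)
    rw [div_lt_div_iff₀ (hden a ha) (hden b hb)]
    have h1 := hq a b ha hab
    have e1 : μ a = (s a - m) * (s a + m) := by linarith [hsq a ha]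
    have e2 : μ b = (s b - m) * (s b + m) := by linarith [hsq b hb]
    rw [e1, e2] at h1
    have h2 := hsmono a b ha hab
    have h3 := hsm a ha
    have h4 : (s a - m) * (a * (s b + m)) ≤ (s b - m) * (a * (s b + m)) := by
      apply mul_le_mul_of_nonneg_right (by linarith)
      have := hden b hb
      positivity
    have h5 : (s a - m) * (a * (s b + m)) < (s a - m) * (b * (s a + m)) := by nlinarith
    exact lt_of_mul_lt_mul_left h5 (by linarith)
  have hscont : ContinuousOn s (Ioi 0) := (hμcont.add continuousOn_const).sqrt
  have hgcont : ContinuousOn g (Ioi 0) :=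
    continuousOn_id.div (hscont.add continuousOn_const) (fun a ha => (hden a ha).ne')
  have hgsurj : ∀ y, 0 < y → ∃ a, 0 < a ∧ g a = y := by
    intro y hy
    have hμ1 := (hμpos 1 one_pos).1
    set a1 := min 1 (y^2 * μ 1) with ha1
    have p1 : 0 < a1 := lt_min one_pos (by positivity)
    have C0 : 0 < Real.sqrt (Λ + m^2) + m := by
      have : 0 < Real.sqrt (Λ + m^2) := Real.sqrt_pos.2 (by positivity)
      linarith
    have p2 : 0 < y * (Real.sqrt (Λ + m^2) + m) := by positivity
    have l1 : g a1 ≤ y := by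
      show a1 / (s a1 + m) ≤ y
      rw [div_le_iff₀ (hden a1 p1)]
      have k1 : a1 ≤ y^2 * μ 1 := min_le_right _ _
      have k2 : μ 1 * a1 ≤ μ a1 := by
        rcases (min_le_left 1 (y^2 * μ 1)).lt_or_eq with h | h
        · have := hq a1 1 p1 h
          linarith
        · rw [← ha1] at h
          rw [h, mul_one]
      have k3 : a1 ^ 2 ≤ (y * s a1) ^ 2 := by
        rw [mul_pow, hsq a1 p1]
        have : y^2 * (μ 1 * a1) ≤ y^2 * μ a1 := by gcongr
        nlinarith [mul_nonneg (sq_nonneg y) (sq_nonneg m)]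
      have k4 := abs_le_of_sq_le_sq k3 (mul_nonneg hy.le (hs0 a1))
      nlinarith [le_abs_self a1, mul_nonneg hy.le hm]
    have l2 : y ≤ g (y * (Real.sqrt (Λ + m^2) + m)) := by
      show y ≤ _ / (s _ + m)
      rw [le_div_iff₀ (hden _ p2)]
      have := hsΛ _ p2
      gcongr
    obtain ⟨a, ha, h⟩ := isPreconnected_Ioi.intermediate_value
      (show a1 ∈ Ioi 0 from p1) (show _ ∈ Ioi 0 from p2) hgcont ⟨l1, l2⟩
    exact ⟨a, ha, h⟩
  have hv : ∀ x ∈ Ioo (-(π/2)) (π/2), 0 < vartheta x ∧ -1 < Real.sin x ∧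
      vartheta x ^ 2 * (1 + Real.sin x) = 1 - Real.sin x := by
    intro x hx
    have hc := Real.cos_pos_of_mem_Ioo hx
    have hsc := Real.sin_sq_add_cos_sq x
    have h1 : Real.sin x < 1 := by nlinarith
    have h2 : -1 < Real.sin x := by nlinarith
    refine ⟨div_pos (by linarith) hc, h2, ?_⟩
    unfold vartheta
    rw [div_pow, div_mul_eq_mul_div, div_eq_iff (by positivity)]
    have : Real.cos x ^ 2 = (1 - Real.sin x) * (1 + Real.sin x) := by linarith
    rw [this]; ring
  have hvanti : StrictAntiOn vartheta (Ioo (-(π/2)) (π/2)) := by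
    intro x hx y hy hxy
    obtain ⟨a1, a2, a3⟩ := hv x hx
    obtain ⟨b1, b2, b3⟩ := hv y hy
    have h := Real.strictMonoOn_sin (Ioo_subset_Icc_self hx) (Ioo_subset_Icc_self hy) hxy
    by_contra hcon
    push Not at hcon
    have h1 : vartheta x ^ 2 * (1 + Real.sin y) ≤ vartheta y ^ 2 * (1 + Real.sin y) := by
      apply mul_le_mul_of_nonneg_right _ (by linarith)
      gcongr
    nlinarith [pow_pos a1 2]
  have hfsurj : ∀ x ∈ Ioo (-(π/2)) (π/2), ∃ a, 0 < a ∧ f a = x := by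
    intro x hx
    obtain ⟨a, ha, h⟩ := hgsurj _ (hv x hx).1
    exact ⟨a, ha, hvanti.injOn (hfmaps a ha) hx ((hf a ha).trans h)⟩
  have hanti : StrictAntiOn lam (Ioo (-(π/2)) (π/2)) := by
    intro x hx y hy hxy
    have h := hvanti hx hy hxy
    obtain ⟨a, ha, rfl⟩ := hfsurj x hx
    obtain ⟨b, hb, rfl⟩ := hfsurj y hy
    rw [hf a ha, hf b hb] at h
    rw [hlam a ha, hlam b hb]
    apply hsmono b a hb
    by_contra hcon
    push Not at hcon
    rcases hcon.lt_or_eq with h' | h'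
    · exact absurd h (hgmono a b ha h').not_gt
    · subst h'; exact lt_irrefl _ h
  have himg : lam '' (Ioo (-(π/2)) (π/2)) = Ioo m (Real.sqrt (Λ + m^2)) := by
    ext y
    constructor
    · rintro ⟨x, hx, rfl⟩
      obtain ⟨a, ha, rfl⟩ := hfsurj x hx
      rw [hlam a ha]
      exact ⟨hsm a ha, hsΛ a ha⟩
    · rintro ⟨h1, h2⟩
      have hy0 : 0 ≤ y := hm.trans h1.le
      have h3 : y^2 < Λ + m^2 := (Real.lt_sqrt hy0).1 h2
      have : y^2 - m^2 ∈ Ioo 0 Λ := ⟨by nlinarith, by linarith⟩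
      rw [← hμrange] at this
      obtain ⟨a, ha, h⟩ := this
      refine ⟨f a, hfmaps a ha, ?_⟩
      rw [hlam a ha]
      show Real.sqrt (μ a + m^2) = y
      rw [h, sub_add_cancel, Real.sqrt_sq hy0]
  refine ⟨?_, hanti, ?_⟩
  · intro x hx
    have hc : ContinuousAt (fun t => - lam t) x := by
      apply continuousAt_of_monotoneOn_of_image_mem_nhds (s := Ioo (-(π/2)) (π/2))
      · exact hanti.antitoneOn.neg
      · exact isOpen_Ioo.mem_nhds hx
      · have : (fun t => - lam t) '' Ioo (-(π/2)) (π/2) = Ioo (-Real.sqrt (Λ + m^2)) (-m) := by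
          rw [← image_image (fun t => -t) lam, himg]
          simp
        rw [this]
        apply isOpen_Ioo.mem_nhds
        rw [← this]
        exact mem_image_of_mem _ hx
    have := hc.neg
    simp only [Pi.neg_def, neg_neg] at this
    exact this.continuousWithinAt
  · rw [← himg]
    exact hanti.injOn.bijOn_image
end

section
/- Let m ≥ 0 and let ϑ(θ) = (1 − sin θ)/cos θ for θ ∈ (−π/2, π/2). The map T defined by T(θ, λ) := ((λ + m)·ϑ(θ), λ² − m²) is a bijection from (−π/2, π/2) × (m, +∞) onto (0, +∞) × (0, +∞); moreover, for every (a, μ) ∈ (0, +∞) × (0, +∞), the unique pair (θ, λ) ∈ (−π/2, π/2) × (m, +∞) with T(θ, λ) = (a, μ) satisfies λ = √(μ + m²) and ϑ(θ) = a/(√(μ + m²) + m). -/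
open Real Set

theorem vartheta_tan (x : ℝ) (h0 : 0 < x) (h1 : x < π/2) : vartheta (π/2 - 2*x) = Real.tan x := by
  have hs : 0 < Real.sin x := Real.sin_pos_of_pos_of_lt_pi h0 (by linarith [Real.pi_pos])
  have hc : 0 < Real.cos x := Real.cos_pos_of_mem_Ioo ⟨by linarith [Real.pi_pos], h1⟩
  unfold vartheta
  rw [Real.sin_pi_div_two_sub, Real.cos_pi_div_two_sub, Real.sin_two_mul, Real.cos_two_mul,
    Real.tan_eq_sin_div_cos, div_eq_div_iff (by positivity) (by positivity)]
  linear_combination (-2 * Real.cos x) * Real.sin_sq_add_cos_sq x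

theorem vartheta_pos (θ : ℝ) (h : θ ∈ Ioo (-(π/2)) (π/2)) : 0 < vartheta θ := by
  have := vartheta_tan ((π/2-θ)/2) (by linarith [h.2]) (by linarith [h.1])
  rw [show π/2 - 2*((π/2-θ)/2) = θ by ring] at this
  rw [this]
  exact Real.tan_pos_of_pos_of_lt_pi_div_two (by linarith [h.2]) (by linarith [h.1])

theorem vartheta_inv (θ : ℝ) (h : θ ∈ Ioo (-(π/2)) (π/2)) :
    θ = π/2 - 2 * Real.arctan (vartheta θ) := by
  have := vartheta_tan ((π/2-θ)/2) (by linarith [h.2]) (by linarith [h.1])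
  rw [show π/2 - 2*((π/2-θ)/2) = θ by ring] at this
  rw [this, Real.arctan_tan (by linarith [h.2, Real.pi_pos]) (by linarith [h.1])]
  ring

/-- The map `T(θ, λ) = ((λ+m)ϑ(θ), λ² − m²)` is a bijection from
`(−π/2, π/2) × (m, ∞)` onto `(0, ∞) × (0, ∞)`, and its inverse is given by
`λ = √(μ+m²)` and `ϑ(θ) = a/(√(μ+m²)+m)`. -/
theorem stmt_10 (m : ℝ) (hm : 0 ≤ m) :
    Set.BijOn (fun p : ℝ × ℝ => ((p.2 + m) * vartheta p.1, p.2^2 - m^2))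
      ((Ioo (-(π/2)) (π/2)) ×ˢ (Ioi m)) ((Ioi (0:ℝ)) ×ˢ (Ioi (0:ℝ))) ∧
    ∀ a μ : ℝ, a ∈ Ioi (0:ℝ) → μ ∈ Ioi (0:ℝ) →
      ∀ θ lam : ℝ, θ ∈ Ioo (-(π/2)) (π/2) → lam ∈ Ioi m →
        ((lam + m) * vartheta θ, lam^2 - m^2) = (a, μ) →
          lam = Real.sqrt (μ + m^2) ∧ vartheta θ = a / (Real.sqrt (μ + m^2) + m) := by
  have key : ∀ a μ : ℝ, a ∈ Ioi (0:ℝ) → μ ∈ Ioi (0:ℝ) →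
      ∀ θ lam : ℝ, θ ∈ Ioo (-(π/2)) (π/2) → lam ∈ Ioi m →
        ((lam + m) * vartheta θ, lam^2 - m^2) = (a, μ) →
          lam = Real.sqrt (μ + m^2) ∧ vartheta θ = a / (Real.sqrt (μ + m^2) + m) := by
    intro a μ ha hμ θ lam hθ hl h
    simp only [Prod.mk.injEq, mem_Ioi] at *
    obtain ⟨h1, h2⟩ := h
    have e : lam = Real.sqrt (μ + m^2) := by
      rw [← h2, sub_add_cancel, Real.sqrt_sq (by linarith)]
    refine ⟨e, ?_⟩
    rw [← e, eq_div_iff (by linarith), ← h1]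
    ring
  have maps : Set.MapsTo (fun p : ℝ × ℝ => ((p.2 + m) * vartheta p.1, p.2^2 - m^2))
      ((Ioo (-(π/2)) (π/2)) ×ˢ (Ioi m)) ((Ioi (0:ℝ)) ×ˢ (Ioi (0:ℝ))) := by
    rintro ⟨θ, l⟩ ⟨hθ, hl⟩
    simp only [mem_Ioi] at hl
    refine ⟨mul_pos (by simp only; linarith) (vartheta_pos θ hθ), ?_⟩
    simp only [mem_Ioi]
    nlinarith
  refine ⟨⟨maps, ?_, ?_⟩, key⟩
  · rintro ⟨θ, l⟩ hp ⟨θ', l'⟩ hq h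
    have hm1 := maps hq
    obtain ⟨a1, a2⟩ := key _ _ hm1.1 hm1.2 θ l hp.1 hp.2 h
    obtain ⟨b1, b2⟩ := key _ _ hm1.1 hm1.2 θ' l' hq.1 hq.2 rfl
    have e : θ = θ' := by
      rw [vartheta_inv θ hp.1, vartheta_inv θ' hq.1, a2, b2]
    rw [e, a1.trans b1.symm]
  · rintro ⟨a, μ⟩ ⟨ha, hμ⟩
    simp only [mem_Ioi] at ha hμ
    have hs : m < Real.sqrt (μ + m^2) := Real.lt_sqrt_of_sq_lt (by linarith)
    have hd : 0 < Real.sqrt (μ + m^2) + m := by linarith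
    have ht : 0 < Real.arctan (a / (Real.sqrt (μ + m^2) + m)) :=
      Real.arctan_pos.2 (div_pos ha hd)
    have ht2 := Real.arctan_lt_pi_div_two (a / (Real.sqrt (μ + m^2) + m))
    refine ⟨(π/2 - 2 * Real.arctan (a / (Real.sqrt (μ + m^2) + m)), Real.sqrt (μ + m^2)),
      ⟨⟨by simp only; linarith, by simp only; linarith⟩, hs⟩, ?_⟩
    simp only [Prod.mk.injEq]
    rw [vartheta_tan _ ht ht2, Real.tan_arctan, Real.sq_sqrt (by positivity)]
    exact ⟨by field_simp, by ring⟩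
end

section
/- Let p > 0 and let f : ℂ → ℂ be complex-differentiable on the open unit disk 𝔻 = {z ∈ ℂ : |z| < 1}. Suppose the Hardy means M_p(r, f) := ((1/(2π)) ∫₀^{2π} |f(r e^{iφ})|^p dφ)^{1/p} are uniformly bounded for 0 < r < 1, and set M := sup_{0 < r < 1} M_p(r, f). Then (1/π) ∫_𝔻 |f(z)|^{2p} dA(z) ≤ M^{2p}, where dA denotes planar Lebesgue measure on 𝔻. -/
open Real Set MeasureTheory

lemma HL_parseval (c : ℕ → ℂ) (h : ℂ → ℂ) (s : ℝ) (hs : 0 ≤ s)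
    (hc : Summable fun n => ‖c n‖ * s ^ n)
    (hh : ∀ z : ℂ, ‖z‖ = s → HasSum (fun n => c n * z ^ n) (h z)) :
    HasSum (fun n => ‖c n‖ ^ 2 * s ^ (2 * n))
      ((1 / (2 * π)) * ∫ φ in (0:ℝ)..(2*π), ‖h ((s : ℂ) * Complex.exp (φ * Complex.I))‖ ^ 2) := by
  have hper : ∀ k : ℤ, (∫ φ in (0:ℝ)..(2*π), Complex.exp (k * φ * Complex.I)) = if k = 0 then 2 * π else 0 := by
    intro k
    split_ifs with hk
    · subst hk; simp
    · have : ∀ φ : ℝ, Complex.exp (k * φ * Complex.I) = Complex.exp ((k * Complex.I) * φ) := by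
        intro φ; congr 1; ring
      simp_rw [this]
      rw [integral_exp_mul_complex (by simp [hk])]
      have : Complex.exp (k * Complex.I * ((2 * π : ℝ) : ℂ)) = 1 := by
        rw [Complex.exp_eq_one_iff]; exact ⟨k, by push_cast; ring⟩
      rw [this]; simp
  set e : ℝ → ℂ := fun φ => (s : ℂ) * Complex.exp (φ * Complex.I) with he
  have hn : ∀ φ : ℝ, ‖e φ‖ = s := by
    intro φ
    rw [he, norm_mul, Complex.norm_exp_ofReal_mul_I]; simp [abs_of_nonneg hs]
  have hec : Continuous e := by fun_prop
  -- uniform convergence gives continuity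
  have hcont : Continuous fun φ => h (e φ) := by
    have : (fun φ => h (e φ)) = fun φ => ∑' n, c n * e φ ^ n := by
      ext φ; exact ((hh _ (hn φ)).tsum_eq).symm
    rw [this]
    refine continuous_tsum (fun n => by fun_prop) hc ?_
    intro n φ; rw [norm_mul, norm_pow, hn]
  -- first swap
  have h1 : ∀ m : ℕ, (∫ φ in (0:ℝ)..(2*π), h (e φ) * (starRingEnd ℂ) (e φ ^ m)) = 2 * π * c m * s ^ (2 * m) := by
    intro m
    have := intervalIntegral.hasSum_intervalIntegral_of_summable_norm (a := 0) (b := 2*π)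
      (f := fun n => (⟨fun φ => c n * e φ ^ n * (starRingEnd ℂ) (e φ ^ m), by fun_prop⟩ : C(ℝ, ℂ))) ?_
    · have h2 : ∀ φ, ∑' n, c n * e φ ^ n * (starRingEnd ℂ) (e φ ^ m) = h (e φ) * (starRingEnd ℂ) (e φ ^ m) := by
        intro φ; rw [tsum_mul_right, (hh _ (hn φ)).tsum_eq]
      simp only [ContinuousMap.coe_mk, h2] at this
      refine this.unique ?_
      have h3 : ∀ n, (∫ φ in (0:ℝ)..(2*π), c n * e φ ^ n * (starRingEnd ℂ) (e φ ^ m)) = if n = m then 2 * π * c m * s ^ (2 * m) else 0 := by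
        intro n
        have : ∀ φ : ℝ, c n * e φ ^ n * (starRingEnd ℂ) (e φ ^ m) = c n * s ^ (n + m) * Complex.exp (((n - m : ℤ) : ℂ) * φ * Complex.I) := by
          intro φ
          simp only [he, map_mul, map_pow, mul_pow, Complex.conj_ofReal, ← Complex.exp_conj, Complex.conj_I, ← Complex.exp_nat_mul]
          have : ((n - m : ℤ) : ℂ) * φ * Complex.I = n * (φ * Complex.I) + m * (φ * -Complex.I) := by push_cast; ring
          rw [this, Complex.exp_add, Complex.conj_natCast]; ring
        simp_rw [this]
        rw [intervalIntegral.integral_const_mul, hper]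
        by_cases hnm : n = m
        · subst hnm; simp; ring
        · have : ((n : ℤ) - m) ≠ 0 := by omega
          simp [this, hnm]
      simp_rw [h3]
      exact hasSum_ite_eq m _
    · refine Summable.of_nonneg_of_le (fun _ => norm_nonneg _) (fun n => ?_) (hc.mul_right (s ^ m))
      rw [ContinuousMap.norm_le _ (by positivity)]
      rintro ⟨φ, hφ⟩
      simp [hn]
  have h4 := intervalIntegral.hasSum_intervalIntegral_of_summable_norm (a := 0) (b := 2*π)
      (f := fun m => (⟨fun φ => (starRingEnd ℂ) (c m) * (h (e φ) * (starRingEnd ℂ) (e φ ^ m)), continuous_const.mul (hcont.mul (by fun_prop))⟩ : C(ℝ, ℂ))) ?_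
  · have h2 : ∀ φ, ∑' m, (starRingEnd ℂ) (c m) * (h (e φ) * (starRingEnd ℂ) (e φ ^ m)) = ((‖h (e φ)‖ ^ 2 : ℝ) : ℂ) := by
      intro φ
      have := (hh _ (hn φ)).mapL (Complex.conjCLE : ℂ →L[ℝ] ℂ)
      have := this.mul_left (h (e φ))
      rw [Complex.ofReal_pow, ← Complex.mul_conj']
      refine Eq.trans (tsum_congr fun m => ?_) this.tsum_eq
      change _ = h (e φ) * (starRingEnd ℂ) (c m * e φ ^ m)
      rw [map_mul]; ring
    simp only [ContinuousMap.coe_mk, h2, intervalIntegral.integral_const_mul, h1, intervalIntegral.integral_ofReal] at h4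
    have h5 := h4.mul_left (1 / (2 * π) : ℂ)
    rw [← Complex.hasSum_ofReal]
    have h6 : ((1 / (2 * π) * ∫ φ in (0:ℝ)..(2*π), ‖h (e φ)‖ ^ 2 : ℝ) : ℂ) = 1 / (2 * π : ℂ) * ((∫ φ in (0:ℝ)..(2*π), ‖h (e φ)‖ ^ 2 : ℝ) : ℂ) := by
      push_cast; rfl
    rw [h6]
    refine h5.congr_fun ?_
    · intro n
      push_cast
      rw [← Complex.conj_mul']
      have : (π : ℂ) ≠ 0 := by exact_mod_cast pi_ne_zero
      field_simp
  · have hK : ∀ φ, ‖h (e φ)‖ ≤ ∑' n, ‖c n‖ * s ^ n := by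
      intro φ
      rw [← (hh _ (hn φ)).tsum_eq]
      refine (norm_tsum_le_tsum_norm ?_).trans_eq ?_ <;> simp only [norm_mul, norm_pow, hn] 
      exact hc
    have hK0 : 0 ≤ ∑' n, ‖c n‖ * s ^ n := tsum_nonneg fun n => by positivity
    refine Summable.of_nonneg_of_le (fun _ => norm_nonneg _) (fun n => ?_) (hc.mul_right (∑' n, ‖c n‖ * s ^ n))
    rw [ContinuousMap.norm_le _ (by positivity)]
    rintro ⟨φ, hφ⟩
    simp only [ContinuousMap.restrict_apply, ContinuousMap.coe_mk, norm_mul, RCLike.norm_conj, norm_pow, hn]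
    calc _ = (‖c n‖ * s ^ n) * ‖h (e φ)‖ := by ring
      _ ≤ _ := by gcongr; exact hK φ

lemma HL_polar (F : ℂ → ℝ) (R : ℝ) (hF : ContinuousOn F (Metric.ball 0 R)) (hF0 : ∀ z, 0 ≤ F z) :
    ∫⁻ z in Metric.ball (0:ℂ) R, ENNReal.ofReal (F z) =
    ∫⁻ s in Ioo 0 R, ENNReal.ofReal s * ENNReal.ofReal (∫ φ in (0:ℝ)..(2*π), F ((s:ℂ) * Complex.exp (φ * Complex.I))) := by
  classical
  set H : ℂ → ENNReal := (Metric.ball (0:ℂ) R).indicator (fun z => ENNReal.ofReal (F z)) with hH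
  have hHm : Measurable H := by
    have := ContinuousOn.measurable_piecewise (f := fun z => ENNReal.ofReal (F z)) (g := 0)
      (s := Metric.ball (0:ℂ) R) (ENNReal.continuous_ofReal.comp_continuousOn hF) continuousOn_const measurableSet_ball
    rwa [Set.piecewise_eq_indicator] at this
  rw [← lintegral_indicator measurableSet_ball, ← Complex.lintegral_comp_polarCoord_symm]
  have ht : polarCoord.target = Ioi (0:ℝ) ×ˢ Ioo (-π) π := rfl
  rw [ht, Measure.volume_eq_prod, ← Measure.prod_restrict, lintegral_prod]
  swap
  · apply Measurable.aemeasurable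
    apply Measurable.mul (by fun_prop)
    apply hHm.comp
    have : (fun p : ℝ × ℝ => Complex.polarCoord.symm p) = fun p : ℝ × ℝ => (p.1 * (Real.cos p.2 + Real.sin p.2 * Complex.I) : ℂ) := by
      ext p; exact Complex.polarCoord_symm_apply p
    have h2 : Measurable (fun p : ℝ × ℝ => Complex.polarCoord.symm p) := by
      rw [this]
      fun_prop
    exact h2
  have hIoo : Ioo 0 R = Ioi 0 ∩ Iio R := rfl
  rw [hIoo, ← Measure.restrict_restrict_of_subset (s := Ioi (0:ℝ) ∩ Iio R) (t := Ioi 0) inter_subset_left,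
    ← lintegral_indicator (measurableSet_Ioi.inter measurableSet_Iio)]
  refine setLIntegral_congr_fun measurableSet_Ioi ?_
  intro s hs
  have hs0 : 0 < s := hs
  have hpt : ∀ φ : ℝ, Complex.polarCoord.symm (s, φ) = (s:ℂ) * Complex.exp (φ * Complex.I) := by
    intro φ; rw [Complex.polarCoord_symm_apply, Complex.exp_mul_I]; push_cast; rfl
  have hn : ∀ φ : ℝ, ‖(s : ℂ) * Complex.exp (φ * Complex.I)‖ = s := by
    intro φ
    rw [norm_mul, Complex.norm_exp_ofReal_mul_I]; simp [abs_of_pos hs0]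
  simp only [hpt, smul_eq_mul]
  by_cases hsR : s < R
  · have hm : s ∈ Ioi (0:ℝ) ∩ Iio R := ⟨hs0, hsR⟩
    rw [indicator_of_mem hm]
    have hb : ∀ φ : ℝ, (s : ℂ) * Complex.exp (φ * Complex.I) ∈ Metric.ball (0:ℂ) R := by
      intro φ; rw [mem_ball_zero_iff, hn]; exact hsR
    have : ∀ φ : ℝ, H ((s : ℂ) * Complex.exp (φ * Complex.I)) = ENNReal.ofReal (F ((s : ℂ) * Complex.exp (φ * Complex.I))) :=
      fun φ => indicator_of_mem (hb φ) _
    have hcont : Continuous fun φ : ℝ => F ((s : ℂ) * Complex.exp (φ * Complex.I)) :=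
      hF.comp_continuous (by fun_prop) hb
    rw [lintegral_const_mul' _ _ ENNReal.ofReal_ne_top]
    congr 1
    change ∫⁻ φ in Ioo (-π) π, H ((s : ℂ) * Complex.exp (φ * Complex.I)) = _
    simp_rw [this]
    rw [← ofReal_integral_eq_lintegral_ofReal, ← integral_Ioc_eq_integral_Ioo,
      ← intervalIntegral.integral_of_le (by linarith [pi_pos])]
    · congr 1
      have hper : Function.Periodic (fun φ : ℝ => F ((s : ℂ) * Complex.exp (φ * Complex.I))) (2 * π) := by
        intro φ
        simp only
        congr 2
        rw [← Complex.exp_periodic (φ * Complex.I)]; congr 1; push_cast; ring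
      have := hper.intervalIntegral_add_eq (-π) 0
      rw [zero_add] at this
      rw [← this]; congr 1; ring
    · exact (hcont.integrableOn_Icc (a := -π) (b := π)).mono_set Ioo_subset_Icc_self
    · exact Filter.Eventually.of_forall fun φ => hF0 _
  · have hm : s ∉ Ioi (0:ℝ) ∩ Iio R := fun h => hsR h.2
    rw [indicator_of_notMem hm]
    have : ∀ φ : ℝ, H ((s : ℂ) * Complex.exp (φ * Complex.I)) = 0 := by
      intro φ; apply indicator_of_notMem; rw [mem_ball_zero_iff, hn]; exact hsR
    change ∫⁻ φ in Ioo (-π) π, _ * H ((s : ℂ) * Complex.exp (φ * Complex.I)) = _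
    simp [this]

lemma HL_area (c : ℕ → ℂ) (h : ℂ → ℂ) (R R' : ℝ) (hR : 0 < R) (hRR : R < R')
    (hcont : ContinuousOn h (Metric.ball 0 R'))
    (hc : ∀ s, 0 ≤ s → s < R' → Summable fun n => ‖c n‖ * s ^ n)
    (hh : ∀ z : ℂ, ‖z‖ < R' → HasSum (fun n => c n * z ^ n) (h z)) :
    ∫⁻ z in Metric.ball (0:ℂ) R, ENNReal.ofReal (‖h z‖ ^ 2) = 
      ∑' n : ℕ, ENNReal.ofReal (π * R ^ 2 * (‖c n‖ ^ 2 / (n + 1) * R ^ (2 * n))) := by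
  rw [HL_polar (fun z => ‖h z‖ ^ 2) R ((hcont.mono (Metric.ball_subset_ball hRR.le)).norm.pow 2) (fun z => by positivity)]
  have h1 : ∀ s ∈ Ioo 0 R, ENNReal.ofReal s * ENNReal.ofReal (∫ φ in (0:ℝ)..(2*π), ‖h ((s:ℂ) * Complex.exp (φ * Complex.I))‖ ^ 2)
      = ∑' n : ℕ, ENNReal.ofReal (2 * π * ‖c n‖ ^ 2 * s ^ (2 * n + 1)) := by
    intro s hs
    have h2 := HL_parseval c h s hs.1.le (hc s hs.1.le (hs.2.trans hRR)) (fun z hz => hh z (by rw [hz]; exact hs.2.trans hRR))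
    have h3 := h2.mul_left (2 * π * s)
    rw [← ENNReal.ofReal_mul hs.1.le]
    have h0 := hs.1
    have h4 : ∀ n : ℕ, 2 * π * s * (‖c n‖ ^ 2 * s ^ (2 * n)) = 2 * π * ‖c n‖ ^ 2 * s ^ (2 * n + 1) := fun n => by ring
    simp_rw [h4] at h3
    rw [← ENNReal.ofReal_tsum_of_nonneg (fun n => by positivity) h3.summable, h3.tsum_eq]
    congr 1
    have := pi_ne_zero
    generalize (∫ φ in (0:ℝ)..(2*π), ‖h ((s:ℂ) * Complex.exp (φ * Complex.I))‖ ^ 2) = I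
    field_simp
  rw [setLIntegral_congr_fun measurableSet_Ioo h1, lintegral_tsum (fun n => by fun_prop)]
  congr 1; ext1 n
  rw [← ofReal_integral_eq_lintegral_ofReal, ← integral_Ioc_eq_integral_Ioo,
      ← intervalIntegral.integral_of_le hR.le, intervalIntegral.integral_const_mul, integral_pow]
  · congr 1
    push_cast
    field_simp
    ring
  · exact (Continuous.integrableOn_Icc (a := 0) (b := R) (by fun_prop)).mono_set Ioo_subset_Icc_self
  · filter_upwards [ae_restrict_mem measurableSet_Ioo] with s hs
    have := hs.1
    simp only [Pi.zero_apply]; positivity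

lemma HL_carleman (g : ℂ → ℂ) (R R' : ℝ) (hR : 0 < R) (hRR : R < R')
    (hg : DifferentiableOn ℂ g (Metric.ball 0 R')) :
    ∫⁻ z in Metric.ball (0:ℂ) R, ENNReal.ofReal (‖g z‖ ^ 4) ≤
      ENNReal.ofReal (π * R ^ 2 * ((1 / (2 * π)) * ∫ φ in (0:ℝ)..(2*π), ‖g ((R : ℂ) * Complex.exp (φ * Complex.I))‖ ^ 2) ^ 2) := by
  set a : ℕ → ℂ := fun n => (n.factorial : ℂ)⁻¹ * iteratedDeriv n g 0 with ha
  have hs : ∀ z : ℂ, ‖z‖ < R' → HasSum (fun n => a n * z ^ n) (g z) := by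
    intro z hz
    have := Complex.hasSum_taylorSeries_on_ball hg (z := z) (by simpa using hz)
    refine this.congr_fun fun n => ?_
    simp [ha]; ring
  have hsn : ∀ s, 0 ≤ s → s < R' → Summable fun n => ‖a n‖ * s ^ n := by
    intro s h0 h1
    have := (hs s (by simpa [abs_of_nonneg h0] using h1)).summable.norm
    simpa [abs_of_nonneg h0] using this
  set c : ℕ → ℂ := fun n => ∑ kl ∈ Finset.HasAntidiagonal.antidiagonal n, a kl.1 * a kl.2 with hc
  have hpow : ∀ (z : ℂ) (n : ℕ), ∑ kl ∈ Finset.HasAntidiagonal.antidiagonal n, (a kl.1 * z ^ kl.1) * (a kl.2 * z ^ kl.2) = c n * z ^ n := by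
    intro z n
    rw [hc, Finset.sum_mul]
    refine Finset.sum_congr rfl fun kl hkl => ?_
    rw [← Finset.HasAntidiagonal.mem_antidiagonal.1 hkl, pow_add]; ring
  have hcsum : ∀ z : ℂ, ‖z‖ < R' → Summable fun n => ‖c n * z ^ n‖ := by
    intro z hz
    have := summable_norm_sum_mul_antidiagonal_of_summable_norm (hs z hz).summable.norm (hs z hz).summable.norm
    simpa only [hpow] using this
  have hcs : ∀ z : ℂ, ‖z‖ < R' → HasSum (fun n => c n * z ^ n) (g z ^ 2) := by
    intro z hz
    have := tsum_mul_tsum_eq_tsum_sum_antidiagonal_of_summable_norm (hs z hz).summable.norm (hs z hz).summable.norm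
    rw [(hs z hz).tsum_eq] at this
    simp only [hpow] at this
    rw [sq, this]
    exact (hcsum z hz).of_norm.hasSum
  have hcn : ∀ s, 0 ≤ s → s < R' → Summable fun n => ‖c n‖ * s ^ n := by
    intro s h0 h1
    have := hcsum s (by simpa [abs_of_nonneg h0] using h1)
    simpa [abs_of_nonneg h0] using this
  have hA := HL_area c (fun z => g z ^ 2) R R' hR hRR (hg.continuousOn.pow 2) hcn hcs
  have h4 : ∀ z, ‖g z ^ 2‖ ^ 2 = ‖g z‖ ^ 4 := fun z => by rw [norm_pow]; ring
  simp only [h4] at hA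
  rw [hA]
  have hP := HL_parseval a g R hR.le (hsn R hR.le hRR) (fun z hz => hs z (by rw [hz]; exact hRR))
  have hPn := hP.summable.norm
  have hprod := tsum_mul_tsum_eq_tsum_sum_antidiagonal_of_summable_norm hPn hPn
  have hprods := (summable_norm_sum_mul_antidiagonal_of_summable_norm hPn hPn).of_norm
  rw [hP.tsum_eq, ← sq] at hprod
  rw [hprod, ← tsum_mul_left, ENNReal.ofReal_tsum_of_nonneg (fun n => by positivity) (hprods.mul_left _)]
  refine ENNReal.tsum_le_tsum fun n => ENNReal.ofReal_le_ofReal ?_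
  gcongr
  have h5 : ∑ kl ∈ Finset.HasAntidiagonal.antidiagonal n, ‖a kl.1‖ ^ 2 * R ^ (2 * kl.1) * (‖a kl.2‖ ^ 2 * R ^ (2 * kl.2))
     = (∑ kl ∈ Finset.HasAntidiagonal.antidiagonal n, (‖a kl.1‖ * ‖a kl.2‖) ^ 2) * R ^ (2 * n) := by
    rw [Finset.sum_mul]
    refine Finset.sum_congr rfl fun kl hkl => ?_
    rw [← Finset.HasAntidiagonal.mem_antidiagonal.1 hkl, mul_add, pow_add]; ring
  rw [h5]
  gcongr
  rw [div_le_iff₀ (by positivity), mul_comm]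
  calc ‖c n‖ ^ 2 ≤ (∑ kl ∈ Finset.HasAntidiagonal.antidiagonal n, ‖a kl.1‖ * ‖a kl.2‖) ^ 2 := by
        gcongr
        refine (norm_sum_le _ _).trans_eq ?_
        simp
    _ ≤ _ := by
        refine sq_sum_le_card_mul_sum_sq.trans_eq ?_
        simp

lemma HL_factor (R : ℝ) (u z : ℂ) (hR : 0 < R) (hz : ‖z‖ ≤ R) (hu : ‖u‖ < R) :
    ‖z - u‖ ≤ ‖R - (starRingEnd ℂ) u * z / R‖ ∧ (‖z‖ = R → ‖z - u‖ = ‖R - (starRingEnd ℂ) u * z / R‖) ∧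
    (R - (starRingEnd ℂ) u * z / R : ℂ) ≠ 0 := by
  have key : ‖(R - (starRingEnd ℂ) u * z / R : ℂ)‖ ^ 2 - ‖z - u‖ ^ 2 = (R ^ 2 - ‖z‖ ^ 2) * (R ^ 2 - ‖u‖ ^ 2) / R ^ 2 := by
    have h1 : (R - (starRingEnd ℂ) u * z / R : ℂ) = ((R : ℝ) : ℂ) - (((R⁻¹ : ℝ)) : ℂ) * ((starRingEnd ℂ) u * z) := by
      push_cast; ring
    rw [h1]
    simp only [← Complex.normSq_eq_norm_sq, Complex.normSq_apply]
    simp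
    field_simp
    ring
  have hz2 : 0 ≤ R ^ 2 - ‖z‖ ^ 2 := by nlinarith [norm_nonneg z]
  have hu2 : 0 < R ^ 2 - ‖u‖ ^ 2 := by nlinarith [norm_nonneg u]
  refine ⟨?_, ?_, ?_⟩
  · apply le_of_sq_le_sq _ (norm_nonneg _)
    have : 0 ≤ (R ^ 2 - ‖z‖ ^ 2) * (R ^ 2 - ‖u‖ ^ 2) / R ^ 2 := by positivity
    linarith
  · intro h
    rw [h] at key
    simp at key
    rw [← sq_eq_sq₀ (norm_nonneg _) (norm_nonneg _)]
    linarith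
  · intro h
    rw [sub_eq_zero, eq_div_iff (by exact_mod_cast hR.ne')] at h
    have := congrArg norm h
    simp [abs_of_pos hR] at this
    nlinarith [norm_nonneg u, norm_nonneg z]

lemma HL_blaschke (f : ℂ → ℂ) (hf : DifferentiableOn ℂ f (Metric.ball (0 : ℂ) 1))
    (hf0 : ¬ ∀ z ∈ Metric.ball (0 : ℂ) 1, f z = 0) (s : ℝ) (hs0 : 0 < s) (hs1 : s < 1) :
    ∃ (R R' : ℝ) (G : ℂ → ℂ), s < R ∧ R < 1 ∧ R < R' ∧ DifferentiableOn ℂ G (Metric.ball 0 R') ∧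
      (∀ z ∈ Metric.ball 0 R', G z ≠ 0) ∧ (∀ z, ‖z‖ ≤ R → ‖f z‖ ≤ ‖G z‖) ∧
      (∀ z, ‖z‖ = R → ‖f z‖ = ‖G z‖) := by
  classical
  set R1 := (1 + s) / 2 with hR1
  have hR1s : s < R1 := by rw [hR1]; linarith
  have hR11 : R1 < 1 := by rw [hR1]; linarith
  have hfa : AnalyticOnNhd ℂ f (Metric.ball 0 1) := hf.analyticOnNhd Metric.isOpen_ball
  have hsub : Metric.closedBall (0:ℂ) R1 ⊆ Metric.ball 0 1 := Metric.closedBall_subset_ball hR11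
  have hfa1 : AnalyticOnNhd ℂ f (Metric.closedBall 0 R1) := hfa.mono hsub
  have hfm : MeromorphicOn f (Metric.closedBall 0 R1) := hfa1.meromorphicOn
  have hord : ∀ u : Metric.closedBall (0:ℂ) R1, meromorphicOrderAt f u ≠ ⊤ := by
    rintro ⟨u, hu⟩ htop
    rw [meromorphicOrderAt_eq_top_iff] at htop
    apply hf0
    have := hfa.eqOn_zero_of_preconnected_of_frequently_eq_zero (convex_ball _ _).isPreconnected (hsub hu) htop.frequently
    exact this
  have hfin : (MeromorphicOn.divisor f (Metric.closedBall 0 R1)).support.Finite :=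
    (MeromorphicOn.divisor f (Metric.closedBall 0 R1)).finiteSupport (isCompact_closedBall _ _)
  obtain ⟨g, hga, hg0, hfg⟩ := hfm.extract_zeros_poles hord hfin
  set D := MeromorphicOn.divisor f (Metric.closedBall 0 R1) with hD
  have hDn : ∀ u, 0 ≤ D u := fun u => MeromorphicOn.AnalyticOnNhd.divisor_nonneg hfa1 u
  set S := hfin.toFinset with hS
  set P : ℂ → ℂ := fun z => ∏ u ∈ S, (z - u) ^ (D u).toNat with hP
  have hprod : (∏ᶠ u : ℂ, (fun x : ℂ => x - u) ^ D u) = P := by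
    rw [finprod_eq_prod_of_mulSupport_subset (s := S)]
    · ext z
      rw [Finset.prod_apply]
      refine Finset.prod_congr rfl fun u _ => ?_
      rw [Pi.pow_apply]
      conv_lhs => rw [← Int.toNat_of_nonneg (hDn u)]
      rw [zpow_natCast]
    · intro u hu
      simp only [hS, Finite.coe_toFinset, Function.mem_support]
      intro h
      apply hu
      simp [h]
  rw [hprod] at hfg
  -- equality everywhere on the closed ball
  have hPc : Continuous P := by fun_prop
  have heq : ∀ z ∈ Metric.ball (0:ℂ) R1, f z = P z * g z := by
    intro z hz
    have hzc := Metric.ball_subset_closedBall hz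
    have h1 := mem_codiscreteWithin_iff_forall_mem_nhdsNE.1 hfg z hzc
    have h2 : f =ᶠ[nhdsWithin z {z}ᶜ] P • g := by
      filter_upwards [h1, mem_nhdsWithin_of_mem_nhds (Metric.isOpen_ball.mem_nhds hz)] with w hw hwb
      rcases hw with hw | hw
      · exact hw
      · exact absurd (Metric.ball_subset_closedBall hwb) hw
    have h3 := (ContinuousAt.eventuallyEq_nhds_iff_eventuallyEq_nhdsNE (hfa1 z hzc).continuousAt
      (hPc.continuousAt.smul (hga z hzc).continuousAt)).1 h2
    exact h3.eq_of_nhds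
  -- choose R
  obtain ⟨R, hRmem, hRS⟩ : ∃ R ∈ Ioo s R1, R ∉ (S.image norm : Set ℝ) :=
    (Ioo_infinite hR1s).exists_notMem_finset (S.image norm)
  have hRpos : 0 < R := hs0.trans hRmem.1
  have hRu : ∀ u ∈ S, ‖u‖ ≠ R := by
    intro u hu h
    apply hRS
    simp only [Finset.coe_image]
    exact ⟨u, hu, h⟩
  set b : ℂ → ℂ → ℂ := fun u z => if ‖u‖ < R then R - (starRingEnd ℂ) u * z / R else z - u with hb
  have hbd : ∀ u, Differentiable ℂ (b u) := by
    intro u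
    simp only [hb]
    split_ifs <;> fun_prop
  have hbP : ∀ u ∈ S, ∀ z, ‖z‖ ≤ R → ‖z - u‖ ≤ ‖b u z‖ ∧ (‖z‖ = R → ‖z - u‖ = ‖b u z‖) ∧ b u z ≠ 0 := by
    intro u hu z hz
    simp only [hb]
    split_ifs with h
    · exact HL_factor R u z hRpos hz h
    · refine ⟨le_rfl, fun _ => rfl, ?_⟩
      intro h0
      have := hRu u hu
      rw [sub_eq_zero] at h0
      subst h0
      exact h (lt_of_le_of_ne hz this)
  set G : ℂ → ℂ := fun z => (∏ u ∈ S, b u z ^ (D u).toNat) * g z with hG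
  have hGa : ∀ z ∈ Metric.closedBall (0:ℂ) R, AnalyticAt ℂ G z ∧ G z ≠ 0 := by
    intro z hz
    have hz1 : z ∈ Metric.closedBall (0:ℂ) R1 := Metric.closedBall_subset_closedBall hRmem.2.le hz
    constructor
    · apply AnalyticAt.mul _ (hga z hz1)
      have : Differentiable ℂ (fun z => ∏ u ∈ S, b u z ^ (D u).toNat) := by
        refine Differentiable.fun_finsetProd fun u _ => (hbd u).pow _
      exact this.analyticAt z
    · apply mul_ne_zero _ (hg0 ⟨z, hz1⟩)
      rw [Finset.prod_ne_zero_iff]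
      intro u hu
      exact pow_ne_zero _ (hbP u hu z (by simpa using hz)).2.2
  have hopen : IsOpen {z | AnalyticAt ℂ G z ∧ G z ≠ 0} := by
    rw [isOpen_iff_mem_nhds]
    rintro z ⟨h1, h2⟩
    filter_upwards [h1.eventually_analyticAt, h1.continuousAt.eventually_ne h2] with w hw1 hw2 using ⟨hw1, hw2⟩
  obtain ⟨δ, hδ, hδs⟩ := (isCompact_closedBall (0:ℂ) R).exists_thickening_subset_open hopen hGa
  rw [thickening_closedBall hδ hRpos.le] at hδs
  refine ⟨R, δ + R, G, hRmem.1, hRmem.2.trans hR11, by linarith, ?_, ?_, ?_, ?_⟩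
  · intro z hz; exact (hδs hz).1.differentiableAt.differentiableWithinAt
  · intro z hz; exact (hδs hz).2
  · intro z hz
    rw [heq z (by simpa using hz.trans_lt hRmem.2)]
    simp only [hG, hP, norm_mul, norm_prod, norm_pow]
    gcongr with u hu
    exact (hbP u hu z hz).1
  · intro z hz
    rw [heq z (by simpa using hz.le.trans_lt hRmem.2)]
    simp only [hG, hP, norm_mul, norm_prod, norm_pow]
    congr 1
    refine Finset.prod_congr rfl fun u hu => ?_
    rw [(hbP u hu z hz.le).2.1 hz]

lemma HL_log (G : ℂ → ℂ) (R' : ℝ) (hR' : 0 < R') (hG : DifferentiableOn ℂ G (Metric.ball 0 R'))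
    (hG0 : ∀ z ∈ Metric.ball 0 R', G z ≠ 0) :
    ∃ L : ℂ → ℂ, DifferentiableOn ℂ L (Metric.ball 0 R') ∧ ∀ z ∈ Metric.ball 0 R', G z = Complex.exp (L z) := by
  have h1 : DifferentiableOn ℂ (fun z => deriv G z / G z) (Metric.ball 0 R') :=
    (hG.deriv Metric.isOpen_ball).div hG hG0
  obtain ⟨L, hL⟩ := h1.isExactOn_ball
  have h0 : (0:ℂ) ∈ Metric.ball (0:ℂ) R' := Metric.mem_ball_self hR'
  have hconst : ∀ z ∈ Metric.ball (0:ℂ) R', G z * Complex.exp (- L z) = G 0 * Complex.exp (- L 0) := by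
    intro z hz
    have hd : ∀ w ∈ Metric.ball (0:ℂ) R', HasDerivAt (fun z => G z * Complex.exp (- L z)) 0 w := by
      intro w hw
      have a1 := (hG.differentiableAt (Metric.isOpen_ball.mem_nhds hw)).hasDerivAt
      have a2 := (hL w hw).neg.cexp
      have := a1.mul a2
      refine this.congr_deriv ?_
      have := hG0 w hw
      simp only [Pi.neg_apply]
      field_simp
      ring
    exact Metric.isOpen_ball.is_const_of_deriv_eq_zero (convex_ball _ _).isPreconnected
      (fun w hw => (hd w hw).differentiableAt.differentiableWithinAt)
      (fun w hw => (hd w hw).deriv) hz h0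
  have hne : G 0 * Complex.exp (- L 0) ≠ 0 := mul_ne_zero (hG0 0 h0) (Complex.exp_ne_zero _)
  refine ⟨fun z => L z + Complex.log (G 0 * Complex.exp (- L 0)), ?_, ?_⟩
  · intro z hz
    exact ((hL z hz).differentiableAt.add_const _).differentiableWithinAt
  · intro z hz
    simp only
    rw [Complex.exp_add, Complex.exp_log hne, ← hconst z hz, mul_left_comm, ← Complex.exp_add]
    simp

lemma HL_sub (p : ℝ) (hp : 0 < p) (f : ℂ → ℂ) (hf : DifferentiableOn ℂ f (Metric.ball (0 : ℂ) 1))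
    (hf0 : ¬ ∀ z ∈ Metric.ball (0 : ℂ) 1, f z = 0) (s : ℝ) (hs0 : 0 < s) (hs1 : s < 1) (K : ℝ)
    (hK : ∀ r ∈ Ioo (0:ℝ) 1, ((1 / (2 * π)) * ∫ φ in (0:ℝ)..(2*π),
        ‖f ((r : ℂ) * Complex.exp (φ * Complex.I))‖ ^ p) ≤ K) :
    ∫⁻ z in Metric.ball (0:ℂ) s, ENNReal.ofReal (‖f z‖ ^ (2 * p)) ≤ ENNReal.ofReal (π * K ^ 2) := by
  obtain ⟨R, R', G, hsR, hR1, hRR, hG, hG0, hle, heq⟩ := HL_blaschke f hf hf0 s hs0 hs1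
  have hR0 : 0 < R := hs0.trans hsR
  obtain ⟨L, hL, hLG⟩ := HL_log G R' (hR0.trans hRR) hG hG0
  set g : ℂ → ℂ := fun z => Complex.exp ((p / 2 : ℝ) * L z) with hg
  have hgd : DifferentiableOn ℂ g (Metric.ball 0 R') := (hL.const_mul _).cexp
  have hgn : ∀ z ∈ Metric.ball (0:ℂ) R', ‖g z‖ = ‖G z‖ ^ (p / 2) := by
    intro z hz
    rw [hLG z hz, hg, Complex.norm_exp, Complex.norm_exp, ← Real.exp_mul, Complex.re_ofReal_mul, mul_comm]
  have hn : ∀ φ : ℝ, ‖(R : ℂ) * Complex.exp (φ * Complex.I)‖ = R := by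
    intro φ
    rw [norm_mul, Complex.norm_exp_ofReal_mul_I]; simp [abs_of_pos hR0]
  have hC := HL_carleman g R R' hR0 hRR hgd
  have h2 : ∀ φ : ℝ, ‖g ((R : ℂ) * Complex.exp (φ * Complex.I))‖ ^ 2 = ‖f ((R : ℂ) * Complex.exp (φ * Complex.I))‖ ^ p := by
    intro φ
    rw [hgn _ (by rw [mem_ball_zero_iff, hn]; exact hRR), heq _ (hn φ), ← Real.rpow_mul_natCast (norm_nonneg _)]
    congr 1; push_cast; ring
  simp_rw [h2] at hC
  calc _ ≤ ∫⁻ z in Metric.ball (0:ℂ) R, ENNReal.ofReal (‖f z‖ ^ (2 * p)) :=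
        lintegral_mono_set (Metric.ball_subset_ball hsR.le)
    _ ≤ ∫⁻ z in Metric.ball (0:ℂ) R, ENNReal.ofReal (‖g z‖ ^ 4) := by
        refine setLIntegral_mono' measurableSet_ball fun z hz => ENNReal.ofReal_le_ofReal ?_
        rw [mem_ball_zero_iff] at hz
        rw [hgn z (by rw [mem_ball_zero_iff]; exact hz.trans hRR), ← Real.rpow_mul_natCast (norm_nonneg _)]
        have : p / 2 * (4 : ℕ) = 2 * p := by push_cast; ring
        rw [this]
        exact Real.rpow_le_rpow (norm_nonneg _) (hle z hz.le) (by positivity)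
    _ ≤ _ := hC
    _ ≤ _ := by
        apply ENNReal.ofReal_le_ofReal
        have h3 := hK R ⟨hR0, hR1⟩
        have h4 : 0 ≤ (1 / (2 * π)) * ∫ φ in (0:ℝ)..(2*π), ‖f ((R : ℂ) * Complex.exp (φ * Complex.I))‖ ^ p := by
          apply mul_nonneg (by positivity)
          exact intervalIntegral.integral_nonneg (by positivity) fun φ _ => by positivity
        rw [mul_assoc]
        gcongr
        calc _ ≤ 1 * ((1 / (2 * π)) * ∫ φ in (0:ℝ)..(2*π), ‖f ((R : ℂ) * Complex.exp (φ * Complex.I))‖ ^ p) ^ 2 := by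
              gcongr; exact pow_le_one₀ hR0.le hR1.le
          _ ≤ _ := by rw [one_mul]; gcongr

/-- Inequality part of the sharp Hardy–Littlewood embedding `H^p(𝔻) ↪ A^{2p}(𝔻)`
(Theorem 5.1 of the paper): `‖f‖_{A^{2p}}^{2p} ≤ ‖f‖_{H^p}^{2p}`. -/
theorem stmt_11 (p : ℝ) (hp : 0 < p) (f : ℂ → ℂ)
    (hf : DifferentiableOn ℂ f (Metric.ball (0 : ℂ) 1))
    (hbdd : BddAbove (Set.range fun r : Set.Ioo (0:ℝ) 1 =>
      ((1 / (2 * π)) * ∫ φ in (0:ℝ)..(2*π),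
        ‖f (((r : ℝ) : ℂ) * Complex.exp (φ * Complex.I))‖ ^ p) ^ (1/p)))
    (M : ℝ)
    (hM : M = ⨆ r : Set.Ioo (0:ℝ) 1,
      ((1 / (2 * π)) * ∫ φ in (0:ℝ)..(2*π),
        ‖f (((r : ℝ) : ℂ) * Complex.exp (φ * Complex.I))‖ ^ p) ^ (1/p)) :
    (1 / π) * ∫ z in Metric.ball (0 : ℂ) 1, ‖f z‖ ^ (2*p) ≤ M ^ (2*p) := by
  have hA0 : ∀ r : ℝ, 0 ≤ (1 / (2 * π)) * ∫ φ in (0:ℝ)..(2*π), ‖f ((r : ℂ) * Complex.exp (φ * Complex.I))‖ ^ p := by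
    intro r
    apply mul_nonneg (by positivity)
    exact intervalIntegral.integral_nonneg (by positivity) fun φ _ => by positivity
  have hM0 : 0 ≤ M := by
    rw [hM]
    exact Real.iSup_nonneg fun r => Real.rpow_nonneg (hA0 _) _
  by_cases hf0 : ∀ z ∈ Metric.ball (0 : ℂ) 1, f z = 0
  · have : ∫ z in Metric.ball (0 : ℂ) 1, ‖f z‖ ^ (2*p) = 0 := by
      rw [setIntegral_congr_fun (g := fun _ => (0:ℝ)) measurableSet_ball]
      · simp
      · intro z hz
        simp only [hf0 z hz, norm_zero]
        exact Real.zero_rpow (by positivity)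
    rw [this, mul_zero]
    exact Real.rpow_nonneg hM0 _
  have hK : ∀ r ∈ Ioo (0:ℝ) 1, ((1 / (2 * π)) * ∫ φ in (0:ℝ)..(2*π),
        ‖f ((r : ℂ) * Complex.exp (φ * Complex.I))‖ ^ p) ≤ M ^ p := by
    intro r hr
    have h1 := le_ciSup hbdd ⟨r, hr⟩
    rw [← hM] at h1
    have h2 := Real.rpow_le_rpow (Real.rpow_nonneg (hA0 r) _) h1 hp.le
    rwa [← Real.rpow_mul (hA0 r), one_div_mul_cancel hp.ne', Real.rpow_one] at h2
  have hlint : ∫⁻ z in Metric.ball (0:ℂ) 1, ENNReal.ofReal (‖f z‖ ^ (2 * p)) ≤ ENNReal.ofReal (π * (M ^ p) ^ 2) := by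
    have hU : Metric.ball (0:ℂ) 1 = ⋃ n : ℕ, Metric.ball (0:ℂ) (1 - 1 / ((n:ℝ) + 2)) := by
      ext z
      simp only [mem_iUnion, mem_ball_zero_iff]
      constructor
      · intro hz
        obtain ⟨n, hn⟩ := exists_nat_one_div_lt (sub_pos.2 hz)
        refine ⟨n, ?_⟩
        have : 1 / ((n:ℝ) + 2) ≤ 1 / ((n:ℝ) + 1) := by gcongr; norm_num
        linarith
      · rintro ⟨n, hn⟩
        have : 0 < 1 / ((n:ℝ) + 2) := by positivity
        linarith
    have hmono : Monotone fun n : ℕ => Metric.ball (0:ℂ) (1 - 1 / ((n:ℝ) + 2)) := by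
      intro m n hmn
      apply Metric.ball_subset_ball
      gcongr
    rw [hU, setLIntegral_iUnion_of_directed _ hmono.directed_le]
    refine iSup_le fun n => HL_sub p hp f hf hf0 _ ?_ ?_ _ hK
    · rw [sub_pos, div_lt_one (by positivity)]
      have : (0:ℝ) ≤ n := by positivity
      linarith
    · have : 0 < 1 / ((n:ℝ) + 2) := by positivity
      linarith
  have hmeas : AEStronglyMeasurable (fun z => ‖f z‖ ^ (2 * p)) (volume.restrict (Metric.ball (0:ℂ) 1)) :=
    (hf.continuousOn.norm.rpow_const fun z _ => Or.inr (by positivity)).aestronglyMeasurable measurableSet_ball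
  rw [integral_eq_lintegral_of_nonneg_ae (Filter.Eventually.of_forall fun z => by positivity) hmeas]
  have h5 := ENNReal.toReal_mono ENNReal.ofReal_ne_top hlint
  rw [ENNReal.toReal_ofReal (by positivity)] at h5
  calc _ ≤ 1 / π * (π * (M ^ p) ^ 2) := by gcongr
    _ = (M ^ p) ^ 2 := by field_simp
    _ = _ := by rw [← Real.rpow_mul_natCast hM0]; congr 1; push_cast; ring
end

section
/- Let f : ℂ → ℂ be complex-differentiable on the open unit disk 𝔻 = {z ∈ ℂ : |z| < 1} and suppose M := sup_{0 < r < 1} ((1/(2π)) ∫₀^{2π} |f(r e^{iφ})|² dφ)^{1/2} is finite. Then (1/π) ∫_𝔻 |f(z)|⁴ dA(z) = M⁴ if and only if there exist c₁, c₂ ∈ ℂ with |c₂| < 1 such that f(z) = c₁/(1 − c₂ z) for every z ∈ 𝔻. (Here dA denotes planar Lebesgue measure on 𝔻.) -/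
open Real Set MeasureTheory

lemma aux_orth (a : ℝ) (m n : ℕ) :
    ∫ φ in a..(a + 2*π), Complex.exp (m * (φ * Complex.I)) * Complex.exp (-(n * (φ * Complex.I)))
      = if m = n then (2 * π : ℂ) else 0 := by
  split_ifs with h
  · subst h
    simp [← Complex.exp_add]
  · have hc : ((m : ℂ) - n) * Complex.I ≠ 0 :=
      mul_ne_zero (sub_ne_zero.2 (by exact_mod_cast h)) Complex.I_ne_zero
    have := integral_exp_mul_complex (a := a) (b := a + 2 * π) hc
    have e : ∀ φ : ℝ, Complex.exp (m * (φ * Complex.I)) * Complex.exp (-(n * (φ * Complex.I)))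
      = Complex.exp (((m : ℂ) - n) * Complex.I * φ) := by
      intro φ; rw [← Complex.exp_add]; ring_nf
    simp_rw [e]
    rw [this]
    have : Complex.exp (((m : ℂ) - n) * Complex.I * ((a + 2 * π : ℝ) : ℂ))
        = Complex.exp (((m : ℂ) - n) * Complex.I * a) := by
      rw [Complex.exp_eq_exp_iff_exists_int]
      refine ⟨(m : ℤ) - n, ?_⟩
      push_cast; ring
    rw [this]; simp

lemma aux_norm_exp (n : ℕ) (φ : ℝ) : ‖Complex.exp (n * (φ * Complex.I))‖ = 1 := by
  rw [Complex.norm_exp]; simp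

lemma aux_norm_exp2 (n : ℕ) (φ : ℝ) : ‖Complex.exp (-(n * (φ * Complex.I)))‖ = 1 := by
  rw [Complex.norm_exp]; simp

lemma aux_coeff (a : ℝ) (c : ℕ → ℂ) (hc : Summable fun n => ‖c n‖) (n : ℕ) :
    ∫ φ in a..(a + 2*π), (∑' m, c m * Complex.exp (m * (φ * Complex.I))) *
      Complex.exp (-(n * (φ * Complex.I))) = 2 * π * c n := by
  have key : HasSum (fun m => ∫ φ in a..(a + 2*π), c m * Complex.exp (m * (φ * Complex.I)) *
      Complex.exp (-(n * (φ * Complex.I)))) (∫ φ in a..(a + 2*π), 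
      (∑' m, c m * Complex.exp (m * (φ * Complex.I))) *
      Complex.exp (-(n * (φ * Complex.I)))) := by
    apply intervalIntegral.hasSum_integral_of_dominated_convergence (fun m _ => ‖c m‖)
    · intro m
      exact Continuous.aestronglyMeasurable (by fun_prop)
    · intro m
      refine Filter.Eventually.of_forall fun φ _ => ?_
      rw [norm_mul, norm_mul, aux_norm_exp, aux_norm_exp2]; simp
    · exact Filter.Eventually.of_forall fun φ _ => hc
    · simp
    · refine Filter.Eventually.of_forall fun φ _ => ?_
      apply HasSum.mul_right
      apply Summable.hasSum
      apply Summable.of_norm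
      simpa [aux_norm_exp] using hc
  have k2 := hasSum_ite_eq n (2 * π * c n)
  refine key.unique ?_
  convert k2 using 2 with m
  simp_rw [mul_assoc, intervalIntegral.integral_const_mul]
  rw [aux_orth a m n]
  split_ifs with h
  · subst h; ring
  · simp

lemma aux_parseval_s12 (a : ℝ) (c : ℕ → ℂ) (hc : Summable fun n => ‖c n‖) :
    HasSum (fun n => 2 * π * ‖c n‖ ^ 2)
    (∫ φ in a..(a + 2*π), ‖∑' m, c m * Complex.exp (m * (φ * Complex.I))‖ ^ 2) := by
  set F : ℝ → ℂ := fun φ => ∑' m, c m * Complex.exp (m * (φ * Complex.I)) with hF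
  have hs : ∀ φ : ℝ, Summable fun m : ℕ => c m * Complex.exp (m * (φ * Complex.I)) := by
    intro φ
    apply Summable.of_norm
    simpa [aux_norm_exp] using hc
  have hFc : Continuous F := by
    apply continuous_tsum (u := fun n => ‖c n‖)
    · intro i; fun_prop
    · exact hc
    · intro n x; simp [aux_norm_exp]
  have hFb : ∀ φ, ‖F φ‖ ≤ ∑' n, ‖c n‖ := by
    intro φ
    apply tsum_of_norm_bounded hc.hasSum
    intro n; simp [aux_norm_exp]
  have key : HasSum (fun n => ∫ φ in a..(a + 2*π), F φ * 
      (starRingEnd ℂ (c n) * Complex.exp (-(n * (φ * Complex.I))))) (∫ φ in a..(a + 2*π), 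
      F φ * starRingEnd ℂ (F φ)) := by
    apply intervalIntegral.hasSum_integral_of_dominated_convergence 
      (fun m _ => (∑' n, ‖c n‖) * ‖c m‖)
    · intro m
      exact Continuous.aestronglyMeasurable (by fun_prop)
    · intro m
      refine Filter.Eventually.of_forall fun φ _ => ?_
      rw [norm_mul, norm_mul, aux_norm_exp2]
      simp only [RCLike.norm_conj, mul_one]
      gcongr
      exact hFb φ
    · exact Filter.Eventually.of_forall fun φ _ => hc.mul_left _
    · simp
    · refine Filter.Eventually.of_forall fun φ _ => ?_
      apply HasSum.mul_left
      have := (Complex.hasSum_conj'.2 (hs φ).hasSum)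
      have e : (fun m : ℕ => starRingEnd ℂ (c m) * Complex.exp (-(m * (φ * Complex.I)))) =
          fun m : ℕ => starRingEnd ℂ (c m * Complex.exp (m * (φ * Complex.I))) := by
        ext m
        rw [map_mul, ← Complex.exp_conj]
        simp
      rw [e]
      exact this
  have e1 : ∀ φ : ℝ, F φ * starRingEnd ℂ (F φ) = ((‖F φ‖ ^ 2 : ℝ) : ℂ) := by
    intro φ; rw [Complex.mul_conj, Complex.normSq_eq_norm_sq]
  simp_rw [e1] at key
  rw [intervalIntegral.integral_ofReal] at key
  rw [← Complex.hasSum_ofReal]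
  convert key using 2 with n
  have e2 : ∀ φ : ℝ, F φ * (starRingEnd ℂ (c n) * Complex.exp (-(n * (φ * Complex.I))))
     = starRingEnd ℂ (c n) * (F φ * Complex.exp (-(n * (φ * Complex.I)))) := fun φ => by ring
  simp_rw [e2]
  rw [intervalIntegral.integral_const_mul, aux_coeff a c hc n]
  push_cast
  rw [← Complex.mul_conj']
  ring

lemma aux_circ (a : ℝ) (b : ℕ → ℂ) (g : ℂ → ℂ)
    (H : ∀ z ∈ Metric.ball (0 : ℂ) 1, HasSum (fun n => b n * z ^ n) (g z))
    (r : ℝ) (h0 : 0 < r) (h1 : r < 1) :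
    HasSum (fun n => 2 * π * (‖b n‖ ^ 2 * r ^ (2 * n)))
    (∫ φ in a..(a + 2*π), ‖g ((r : ℂ) * Complex.exp (φ * Complex.I))‖ ^ 2) := by
  have hr : (r : ℂ) ∈ Metric.ball (0 : ℂ) 1 := by
    simp [abs_of_pos h0, h1]
  have hc : Summable fun n => ‖b n * (r : ℂ) ^ n‖ := (H _ hr).summable.norm
  have := aux_parseval_s12 a (fun n => b n * (r : ℂ) ^ n) hc
  have e1 : ∀ n, 2 * π * (‖b n‖ ^ 2 * r ^ (2 * n)) = 2 * π * ‖b n * (r : ℂ) ^ n‖ ^ 2 := by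
    intro n
    rw [norm_mul, norm_pow, Complex.norm_real, Real.norm_eq_abs, abs_of_pos h0]; ring
  have e2 : ∀ φ : ℝ, g ((r : ℂ) * Complex.exp (φ * Complex.I)) =
      ∑' n, b n * (r : ℂ) ^ n * Complex.exp (n * (φ * Complex.I)) := by
    intro φ
    have hz : (r : ℂ) * Complex.exp (φ * Complex.I) ∈ Metric.ball (0 : ℂ) 1 := by
      simp [Complex.norm_exp, abs_of_pos h0, h1]
    rw [← (H _ hz).tsum_eq]
    congr 1; ext n
    rw [Complex.exp_nat_mul]; ring
  simp_rw [e1, e2]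
  exact this

lemma aux_rint (n : ℕ) : ∫⁻ r in Ioo (0:ℝ) 1, ENNReal.ofReal (r ^ (2 * n + 1)) =
    ENNReal.ofReal (1 / (2 * (n + 1))) := by
  rw [← ofReal_integral_eq_lintegral_ofReal]
  · rw [← integral_Ioc_eq_integral_Ioo, ← intervalIntegral.integral_of_le zero_le_one, integral_pow]
    congr 1
    push_cast
    field_simp
    ring
  · have : IntervalIntegrable (fun r : ℝ => r ^ (2 * n + 1)) volume 0 1 :=
      (by fun_prop : Continuous fun r : ℝ => r ^ (2 * n + 1)).intervalIntegrable _ _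
    rw [intervalIntegrable_iff_integrableOn_Ioo_of_le zero_le_one] at this
    exact this
  · filter_upwards [ae_restrict_mem measurableSet_Ioo] with r hr
    have := hr.1
    positivity

lemma aux_area (b : ℕ → ℂ) (g : ℂ → ℂ) (hg : ContinuousOn g (Metric.ball (0 : ℂ) 1))
    (H : ∀ z ∈ Metric.ball (0 : ℂ) 1, HasSum (fun n => b n * z ^ n) (g z)) :
    ∫⁻ z in Metric.ball (0 : ℂ) 1, ENNReal.ofReal (‖g z‖ ^ 2) =
      ∑' n : ℕ, ENNReal.ofReal (π * (‖b n‖ ^ 2 / (n + 1))) := by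
  classical
  set G : ℂ → ENNReal := (Metric.ball (0 : ℂ) 1).indicator fun z => ENNReal.ofReal (‖g z‖ ^ 2)
    with hG
  have hGm : Measurable G := by
    rw [hG, ← piecewise_eq_indicator]
    apply ContinuousOn.measurable_piecewise
    · exact ENNReal.continuous_ofReal.comp_continuousOn (hg.norm.pow 2)
    · exact continuousOn_const
    · exact measurableSet_ball
  rw [← lintegral_indicator measurableSet_ball, ← Complex.lintegral_comp_polarCoord_symm]
  have hp : Measurable fun p : ℝ × ℝ => Complex.polarCoord.symm p := by
    simp_rw [Complex.polarCoord_symm_apply]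
    fun_prop
  rw [polarCoord_target, Measure.volume_eq_prod, setLIntegral_prod]
  swap
  · apply Measurable.aemeasurable
    exact (ENNReal.measurable_ofReal.comp measurable_fst).smul (hGm.comp hp)
  have step : ∀ r ∈ Ioi (0:ℝ), ∫⁻ θ in Ioo (-π) π, ENNReal.ofReal r • G (Complex.polarCoord.symm (r, θ))
      = (Ioo (0:ℝ) 1).indicator (fun r => ∑' n : ℕ, ENNReal.ofReal (2 * π * ‖b n‖ ^ 2) * 
        ENNReal.ofReal (r ^ (2 * n + 1))) r := by
    intro r hr
    have hr0 : 0 < r := hr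
    have ez : ∀ θ : ℝ, Complex.polarCoord.symm (r, θ) = (r : ℂ) * Complex.exp (θ * Complex.I) := by
      intro θ
      rw [Complex.polarCoord_symm_apply, Complex.exp_mul_I]
      simp
    simp_rw [ez]
    have en : ∀ θ : ℝ, ‖(r : ℂ) * Complex.exp (θ * Complex.I)‖ = r := by
      intro θ; simp [Complex.norm_exp, abs_of_pos hr0]
    by_cases h1 : r < 1
    · have hm : ∀ θ : ℝ, (r : ℂ) * Complex.exp (θ * Complex.I) ∈ Metric.ball (0 : ℂ) 1 := by
        intro θ; rw [mem_ball_zero_iff, en]; exact h1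
      have eG : ∀ θ : ℝ, G ((r : ℂ) * Complex.exp (θ * Complex.I)) =
          ENNReal.ofReal (‖g ((r : ℂ) * Complex.exp (θ * Complex.I))‖ ^ 2) := by
        intro θ; rw [hG, indicator_of_mem (hm θ)]
      simp_rw [eG, smul_eq_mul]
      have hcont : Continuous fun θ : ℝ => ‖g ((r : ℂ) * Complex.exp (θ * Complex.I))‖ ^ 2 := by
        apply Continuous.pow
        apply Continuous.norm
        exact hg.comp_continuous (by fun_prop) hm
      have hmeas : Measurable fun θ : ℝ =>
          ENNReal.ofReal (‖g ((r : ℂ) * Complex.exp (θ * Complex.I))‖ ^ 2) :=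
        (ENNReal.continuous_ofReal.comp hcont).measurable
      rw [lintegral_const_mul _ hmeas,
        indicator_of_mem (show r ∈ Ioo (0:ℝ) 1 from ⟨hr0, h1⟩)]
      have hc := aux_circ (-π) b g H r hr0 h1
      have hii : IntegrableOn (fun θ : ℝ => ‖g ((r : ℂ) * Complex.exp (θ * Complex.I))‖ ^ 2)
          (Ioo (-π) π) volume := by
        rw [← intervalIntegrable_iff_integrableOn_Ioo_of_le (by linarith [pi_pos])]
        exact hcont.intervalIntegrable _ _
      rw [← ofReal_integral_eq_lintegral_ofReal hii (Filter.Eventually.of_forall fun θ => by positivity),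
        ← integral_Ioc_eq_integral_Ioo, ← intervalIntegral.integral_of_le (by linarith [pi_pos])]
      rw [show -π + 2 * π = π by ring] at hc
      rw [← hc.tsum_eq, ENNReal.ofReal_tsum_of_nonneg (fun n => by positivity) hc.summable,
        ← ENNReal.tsum_mul_left]
      congr 1; ext n
      rw [← ENNReal.ofReal_mul hr0.le, ← ENNReal.ofReal_mul (by positivity)]
      congr 1; ring
    · have eG : ∀ θ : ℝ, G ((r : ℂ) * Complex.exp (θ * Complex.I)) = 0 := by
        intro θ; rw [hG, indicator_of_notMem]
        rw [mem_ball_zero_iff, en]; exact h1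
      rw [indicator_of_notMem (fun h => h1 h.2)]
      simp [eG]
  rw [setLIntegral_congr_fun measurableSet_Ioi step, setLIntegral_indicator measurableSet_Ioo,
    inter_eq_left.2 (fun x hx => hx.1), lintegral_tsum]
  · congr 1; ext n
    rw [lintegral_const_mul _ (by fun_prop), aux_rint, ← ENNReal.ofReal_mul (by positivity)]
    congr 1
    field_simp
  · intro n
    apply Measurable.aemeasurable
    fun_prop

lemma aux_M (a : ℕ → ℂ) (f : ℂ → ℂ)
    (H : ∀ z ∈ Metric.ball (0 : ℂ) 1, HasSum (fun n => a n * z ^ n) (f z))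
    (hbdd : BddAbove (Set.range fun r : Set.Ioo (0:ℝ) 1 =>
      Real.sqrt ((1 / (2 * π)) * ∫ φ in (0:ℝ)..(2*π),
        ‖f (((r : ℝ) : ℂ) * Complex.exp (φ * Complex.I))‖ ^ 2)))
    (M : ℝ)
    (hM : M = ⨆ r : Set.Ioo (0:ℝ) 1,
      Real.sqrt ((1 / (2 * π)) * ∫ φ in (0:ℝ)..(2*π),
        ‖f (((r : ℝ) : ℂ) * Complex.exp (φ * Complex.I))‖ ^ 2)) :
    HasSum (fun n => ‖a n‖ ^ 2) (M ^ 2) := by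
  have hI : ∀ r : Set.Ioo (0:ℝ) 1, HasSum (fun n => ‖a n‖ ^ 2 * (r : ℝ) ^ (2 * n)) 
      ((1 / (2 * π)) * ∫ φ in (0:ℝ)..(2*π),
        ‖f (((r : ℝ) : ℂ) * Complex.exp (φ * Complex.I))‖ ^ 2) := by
    intro r
    have := (aux_circ 0 a f H r r.2.1 r.2.2).mul_left (1 / (2 * π))
    rw [zero_add] at this
    have e : (fun n => ‖a n‖ ^ 2 * (r : ℝ) ^ (2 * n)) =
      fun n => 1 / (2 * π) * (2 * π * (‖a n‖ ^ 2 * (r : ℝ) ^ (2 * n))) := by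
      ext n; field_simp
    rw [e]; exact this
  set I : Set.Ioo (0:ℝ) 1 → ℝ := fun r => ((1 / (2 * π)) * ∫ φ in (0:ℝ)..(2*π),
        ‖f (((r : ℝ) : ℂ) * Complex.exp (φ * Complex.I))‖ ^ 2) with hIdef
  have hI0 : ∀ r, 0 ≤ I r := fun r => (hI r).nonneg fun n => by
    have := r.2.1.le
    positivity
  have hle : ∀ r, √(I r) ≤ M := fun r => hM ▸ le_ciSup hbdd r
  have hM0 : 0 ≤ M := (Real.sqrt_nonneg _).trans (hle ⟨1/2, by norm_num, by norm_num⟩)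
  have hle2 : ∀ r, I r ≤ M ^ 2 := fun r => (Real.sqrt_le_left hM0).1 (hle r)
  have hfin : ∀ s : Finset ℕ, ∑ n ∈ s, ‖a n‖ ^ 2 ≤ M ^ 2 := by
    intro s
    have ht : Filter.Tendsto (fun r : ℝ => ∑ n ∈ s, ‖a n‖ ^ 2 * r ^ (2 * n))
        (nhdsWithin 1 (Iio 1)) (nhds (∑ n ∈ s, ‖a n‖ ^ 2)) := by
      have : Continuous (fun r : ℝ => ∑ n ∈ s, ‖a n‖ ^ 2 * r ^ (2 * n)) := by fun_prop
      have h := (this.tendsto 1).mono_left (nhdsWithin_le_nhds (s := Iio 1))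
      simpa using h
    apply le_of_tendsto ht
    filter_upwards [Ioo_mem_nhdsLT (zero_lt_one' ℝ)] with r hr
    refine le_trans ?_ (hle2 ⟨r, hr⟩)
    have h0 := hr.1.le
    exact sum_le_hasSum s (fun n _ => by positivity) (hI ⟨r, hr⟩)
  have hsum : Summable (fun n => ‖a n‖ ^ 2) :=
    summable_of_sum_le (fun n => by positivity) hfin
  have h1 : ∑' n, ‖a n‖ ^ 2 ≤ M ^ 2 := hsum.tsum_le_of_sum_le hfin
  have h2 : M ^ 2 ≤ ∑' n, ‖a n‖ ^ 2 := by
    have : M ≤ √(∑' n, ‖a n‖ ^ 2) := by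
      rw [hM]
      have : Nonempty (Set.Ioo (0:ℝ) 1) := ⟨⟨1/2, by norm_num, by norm_num⟩⟩
      apply ciSup_le
      intro r
      apply Real.sqrt_le_sqrt
      refine hasSum_le (fun n => ?_) (hI r) hsum.hasSum
      exact mul_le_of_le_one_right (by positivity) (pow_le_one₀ r.2.1.le r.2.2.le)
    calc M ^ 2 ≤ (√(∑' n, ‖a n‖ ^ 2)) ^ 2 := by gcongr
      _ = _ := Real.sq_sqrt (tsum_nonneg fun n => by positivity)
  rw [le_antisymm h2 h1]
  exact hsum.hasSum

lemma aux_var (n : ℕ) (x : ℕ × ℕ → ℂ) :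
    ∑ p ∈ Finset.HasAntidiagonal.antidiagonal n, ‖x p - (∑ p ∈ Finset.HasAntidiagonal.antidiagonal n, x p) / (n + 1)‖ ^ 2 =
    ∑ p ∈ Finset.HasAntidiagonal.antidiagonal n, ‖x p‖ ^ 2 - ‖∑ p ∈ Finset.HasAntidiagonal.antidiagonal n, x p‖ ^ 2 / (n + 1) := by
  set S := ∑ p ∈ Finset.HasAntidiagonal.antidiagonal n, x p with hS
  have hn : (n + 1 : ℂ) ≠ 0 := by exact_mod_cast n.succ_ne_zero
  have hc : ∑ p ∈ Finset.HasAntidiagonal.antidiagonal n, starRingEnd ℂ (x p) = starRingEnd ℂ S := by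
    rw [hS, map_sum]
  rw [← Complex.ofReal_inj]
  push_cast
  simp_rw [← Complex.mul_conj']
  simp only [map_sub, map_div₀, map_add, map_natCast, map_one]
  have e : ∀ p, (x p - S / (n + 1)) * (starRingEnd ℂ (x p) - starRingEnd ℂ S / (n + 1)) =
    x p * starRingEnd ℂ (x p) - x p * (starRingEnd ℂ S / (n + 1))
     - S / (n + 1) * starRingEnd ℂ (x p) + S / (n + 1) * (starRingEnd ℂ S / (n + 1)) := by
    intro p; ring
  simp_rw [e]
  rw [Finset.sum_add_distrib, Finset.sum_sub_distrib, Finset.sum_sub_distrib, ← Finset.sum_mul,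
    ← Finset.mul_sum, hc, ← hS, Finset.sum_const, Finset.Nat.card_antidiagonal, nsmul_eq_mul]
  push_cast
  field_simp
  ring

lemma aux_core (a : ℕ → ℂ) (f : ℂ → ℂ)
    (hf : DifferentiableOn ℂ f (Metric.ball (0 : ℂ) 1))
    (H : ∀ z ∈ Metric.ball (0 : ℂ) 1, HasSum (fun n => a n * z ^ n) (f z))
    (M : ℝ) (hM : HasSum (fun n => ‖a n‖ ^ 2) (M ^ 2)) :
    ((1 / π) * ∫ z in Metric.ball (0 : ℂ) 1, ‖f z‖ ^ 4 = M ^ 4) ↔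
      ∀ n, ∀ p ∈ Finset.HasAntidiagonal.antidiagonal n, a p.1 * a p.2 =
        (∑ p ∈ Finset.HasAntidiagonal.antidiagonal n, a p.1 * a p.2) / (n + 1) := by
  set b : ℕ → ℂ := fun n => ∑ p ∈ Finset.HasAntidiagonal.antidiagonal n, a p.1 * a p.2 with hb
  have H2 : ∀ z ∈ Metric.ball (0 : ℂ) 1, HasSum (fun n => b n * z ^ n) (f z ^ 2) := by
    intro z hz
    have hs := (H z hz).summable.norm
    have h1 := tsum_mul_tsum_eq_tsum_sum_antidiagonal_of_summable_norm hs hs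
    have h2 := (summable_norm_sum_mul_antidiagonal_of_summable_norm hs hs).of_norm.hasSum
    rw [← h1, (H z hz).tsum_eq, ← pow_two] at h2
    have e : (fun n => b n * z ^ n) = fun n => ∑ kl ∈ Finset.HasAntidiagonal.antidiagonal n,
        a kl.1 * z ^ kl.1 * (a kl.2 * z ^ kl.2) := by
      ext n
      rw [hb, Finset.sum_mul]
      refine Finset.sum_congr rfl fun p hp => ?_
      rw [← Finset.HasAntidiagonal.mem_antidiagonal.1 hp, pow_add]; ring
    rw [e]; exact h2
  have he : HasSum (fun n => ∑ p ∈ Finset.HasAntidiagonal.antidiagonal n, ‖a p.1 * a p.2‖ ^ 2)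
      (M ^ 4) := by
    have hs := hM.summable.norm
    have h1 := tsum_mul_tsum_eq_tsum_sum_antidiagonal_of_summable_norm hs hs
    have h2 := (summable_norm_sum_mul_antidiagonal_of_summable_norm hs hs).of_norm.hasSum
    rw [← h1, hM.tsum_eq, ← pow_add] at h2
    simp_rw [norm_mul, mul_pow]
    exact h2
  have hvar : ∀ n, ∑ p ∈ Finset.HasAntidiagonal.antidiagonal n,
      ‖a p.1 * a p.2 - b n / (n + 1)‖ ^ 2 =
      ∑ p ∈ Finset.HasAntidiagonal.antidiagonal n, ‖a p.1 * a p.2‖ ^ 2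
        - ‖b n‖ ^ 2 / (n + 1) := fun n => aux_var n fun p => a p.1 * a p.2
  have hD0 : ∀ n, 0 ≤ ∑ p ∈ Finset.HasAntidiagonal.antidiagonal n,
      ‖a p.1 * a p.2 - b n / (n + 1)‖ ^ 2 := fun n => by positivity
  have hT : Summable fun n : ℕ => ‖b n‖ ^ 2 / (n + 1 : ℝ) := by
    refine he.summable.of_nonneg_of_le (fun n => by positivity) fun n => ?_
    have h1 := hvar n
    have h2 := hD0 n
    linarith
  have hint : (1 / π) * ∫ z in Metric.ball (0 : ℂ) 1, ‖f z‖ ^ 4 =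
      ∑' n : ℕ, ‖b n‖ ^ 2 / (n + 1 : ℝ) := by
    have hA := aux_area b (fun z => f z ^ 2) (hf.continuousOn.pow 2) H2
    rw [← ENNReal.ofReal_tsum_of_nonneg (fun n => by positivity) (hT.mul_left π)] at hA
    have e : ∀ z, ‖f z ^ 2‖ ^ 2 = ‖f z‖ ^ 4 := fun z => by rw [norm_pow]; ring
    simp_rw [e] at hA
    have hmeas : AEStronglyMeasurable (fun z => ‖f z‖ ^ 4)
        (volume.restrict (Metric.ball (0 : ℂ) 1)) :=
      (hf.continuousOn.norm.pow 4).aestronglyMeasurable measurableSet_ball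
    rw [integral_eq_lintegral_of_nonneg_ae (Filter.Eventually.of_forall fun z => by positivity)
      hmeas, hA,
      ENNReal.toReal_ofReal (tsum_nonneg fun n => by positivity), tsum_mul_left]
    field_simp
  have hD := he.sub hT.hasSum
  simp_rw [← hvar] at hD
  rw [hint]
  constructor
  · intro h n p hp
    rw [h, sub_self, hasSum_zero_iff_of_nonneg hD0] at hD
    have h1 := congrFun hD n
    simp only [Pi.zero_apply] at h1
    rw [Finset.sum_eq_zero_iff_of_nonneg (fun p _ => by positivity)] at h1
    have h2 := h1 p hp
    simpa [sub_eq_zero] using h2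
  · intro h
    have e : ∀ n, ∑ p ∈ Finset.HasAntidiagonal.antidiagonal n,
      ‖a p.1 * a p.2 - b n / (n + 1)‖ ^ 2 = 0 := by
      intro n
      refine Finset.sum_eq_zero fun p hp => ?_
      rw [h n p hp]; simp [hb]
    simp_rw [e] at hD
    have := hD.unique hasSum_zero
    linarith



/-- Equality case, for `p = 2`, of the sharp Hardy–Littlewood embedding `H²(𝔻) ↪ A⁴(𝔻)`
(Theorem 5.1 of the paper): equality holds iff `f(z) = c₁/(1 − c₂ z)` with `|c₂| < 1`. -/
theorem stmt_12 (f : ℂ → ℂ)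
    (hf : DifferentiableOn ℂ f (Metric.ball (0 : ℂ) 1))
    (hbdd : BddAbove (Set.range fun r : Set.Ioo (0:ℝ) 1 =>
      Real.sqrt ((1 / (2 * π)) * ∫ φ in (0:ℝ)..(2*π),
        ‖f (((r : ℝ) : ℂ) * Complex.exp (φ * Complex.I))‖ ^ 2)))
    (M : ℝ)
    (hM : M = ⨆ r : Set.Ioo (0:ℝ) 1,
      Real.sqrt ((1 / (2 * π)) * ∫ φ in (0:ℝ)..(2*π),
        ‖f (((r : ℝ) : ℂ) * Complex.exp (φ * Complex.I))‖ ^ 2)) :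
    ((1 / π) * ∫ z in Metric.ball (0 : ℂ) 1, ‖f z‖ ^ 4 = M ^ 4)
      ↔ ∃ c₁ c₂ : ℂ, ‖c₂‖ < 1 ∧ ∀ z ∈ Metric.ball (0 : ℂ) 1, f z = c₁ / (1 - c₂ * z) := by
  constructor
  · intro h
    set a : ℕ → ℂ := fun n => ((n.factorial : ℂ))⁻¹ * iteratedDeriv n f 0 with ha
    have H : ∀ z ∈ Metric.ball (0 : ℂ) 1, HasSum (fun n => a n * z ^ n) (f z) := by
      intro z hz
      have h1 := Complex.hasSum_taylorSeries_on_ball hf hz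
      have e : (fun n => a n * z ^ n) =
          fun n : ℕ => (n.factorial : ℂ)⁻¹ • (z - 0) ^ n • iteratedDeriv n f 0 := by
        ext n
        simp only [ha, smul_eq_mul, sub_zero]; ring
      rw [e]; exact h1
    have hMs := aux_M a f H hbdd M hM
    have hQ := (aux_core a f hf H M hMs).1 h
    have hk : ∀ k l, a k * a l = a 0 * a (k + l) := by
      intro k l
      rw [hQ (k + l) (k, l) (by simp), hQ (k + l) (0, k + l) (by simp)]
    by_cases h0 : a 0 = 0
    · have hz : ∀ n, a n = 0 := by
        intro n
        have := hk n n
        rw [h0, zero_mul] at this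
        exact mul_self_eq_zero.1 this
      refine ⟨0, 0, by simp, fun z hz' => ?_⟩
      have := H z hz'
      simp_rw [hz, zero_mul] at this
      rw [this.unique hasSum_zero]; simp
    · have hn : ∀ n, a n = a 0 * (a 1 / a 0) ^ n := by
        intro n
        induction n with
        | zero => simp
        | succ n ih =>
          have := hk n 1
          have e : a (n + 1) = a n * a 1 / a 0 := by
            rw [this]; field_simp
          rw [e, ih, pow_succ]; ring
      have hc : ‖a 1 / a 0‖ < 1 := by
        have hs := hMs.summable
        have e : (fun n => ‖a n‖ ^ 2) = fun n => ‖a 0‖ ^ 2 * (‖a 1 / a 0‖ ^ 2) ^ n := by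
          ext n; rw [hn n, norm_mul, norm_pow]; ring
        rw [e, summable_mul_left_iff (by simpa using h0), summable_geometric_iff_norm_lt_one] at hs
        rw [norm_pow, norm_norm] at hs
        exact (sq_lt_one_iff₀ (norm_nonneg _)).1 hs
      refine ⟨a 0, a 1 / a 0, hc, fun z hz => ?_⟩
      have hlt : ‖a 1 / a 0 * z‖ < 1 := by
        rw [norm_mul]
        exact mul_lt_one_of_nonneg_of_lt_one_left (norm_nonneg _) hc (mem_ball_zero_iff.1 hz).le
      have hg := (hasSum_geometric_of_norm_lt_one hlt).mul_left (a 0)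
      have e : (fun n => a n * z ^ n) = fun n => a 0 * (a 1 / a 0 * z) ^ n := by
        ext n; rw [hn n, mul_pow, mul_assoc]
      have h1 := H z hz
      rw [e] at h1
      exact (h1.unique hg).trans (div_eq_mul_inv _ _).symm
  · rintro ⟨c₁, c₂, hc, hfc⟩
    have H : ∀ z ∈ Metric.ball (0 : ℂ) 1, HasSum (fun n => c₁ * c₂ ^ n * z ^ n) (f z) := by
      intro z hz
      have hlt : ‖c₂ * z‖ < 1 := by
        rw [norm_mul]
        exact mul_lt_one_of_nonneg_of_lt_one_left (norm_nonneg _) hc (mem_ball_zero_iff.1 hz).le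
      have hg := (hasSum_geometric_of_norm_lt_one hlt).mul_left c₁
      rw [hfc z hz, div_eq_mul_inv]
      simpa only [mul_pow, mul_assoc] using hg
    have hMs := aux_M (fun n => c₁ * c₂ ^ n) f H hbdd M hM
    refine (aux_core _ f hf H M hMs).2 ?_
    have e : ∀ n, ∀ p ∈ Finset.HasAntidiagonal.antidiagonal n,
        c₁ * c₂ ^ p.1 * (c₁ * c₂ ^ p.2) = c₁ ^ 2 * c₂ ^ n := by
      intro n p hp
      rw [← Finset.HasAntidiagonal.mem_antidiagonal.1 hp, pow_add]; ring
    intro n p hp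
    have hn : (n + 1 : ℂ) ≠ 0 := by exact_mod_cast n.succ_ne_zero
    rw [Finset.sum_congr rfl (e n), e n p hp, Finset.sum_const, Finset.Nat.card_antidiagonal,
      nsmul_eq_mul]
    push_cast
    field_simp
end

section
/- Let a : ℕ → ℂ be a sequence with ∑_{n=0}^∞ |a(n)|² < ∞. Then ∑_{n=0}^∞ (1/(n+1)) · | ∑_{j=0}^{n} a(j) · a(n−j) |² ≤ ( ∑_{n=0}^∞ |a(n)|² )², where in particular the series on the left converges. -/
open Real Finset

/-- Coefficient form of the case `p = 2` of the sharp Hardy–Littlewood embedding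
`H²(𝔻) ↪ A⁴(𝔻)`: if `∑ |a n|² < ∞` then
`∑ (1/(n+1)) |∑_{j≤n} a j · a (n−j)|² ≤ (∑ |a n|²)²`, the left series being convergent. -/
theorem stmt_13 (a : ℕ → ℂ) (ha : Summable fun n => ‖a n‖ ^ 2) :
    Summable (fun n : ℕ =>
      (1 / ((n : ℝ) + 1)) * ‖∑ j ∈ Finset.range (n + 1), a j * a (n - j)‖ ^ 2) ∧
    ∑' n : ℕ, (1 / ((n : ℝ) + 1)) * ‖∑ j ∈ Finset.range (n + 1), a j * a (n - j)‖ ^ 2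
      ≤ (∑' n : ℕ, ‖a n‖ ^ 2) ^ 2 := by
  have hp : Summable fun x : ℕ × ℕ => ‖a x.1‖ ^ 2 * ‖a x.2‖ ^ 2 :=
    ha.mul_of_nonneg ha (fun _ => by positivity) (fun _ => by positivity)
  have hs := summable_sum_mul_range_of_summable_mul
    (f := fun n => ‖a n‖ ^ 2) (g := fun n => ‖a n‖ ^ 2) hp
  have he := Summable.tsum_mul_tsum_eq_tsum_sum_range ha ha hp
  have hb : ∀ n : ℕ, (1 / ((n : ℝ) + 1)) * ‖∑ j ∈ Finset.range (n + 1), a j * a (n - j)‖ ^ 2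
      ≤ ∑ j ∈ Finset.range (n + 1), ‖a j‖ ^ 2 * ‖a (n - j)‖ ^ 2 := by
    intro n
    have h1 : ‖∑ j ∈ Finset.range (n + 1), a j * a (n - j)‖
        ≤ ∑ j ∈ Finset.range (n + 1), ‖a j‖ * ‖a (n - j)‖ :=
      (norm_sum_le _ _).trans_eq (by simp only [norm_mul])
    have h2 := sq_sum_le_card_mul_sum_sq (s := Finset.range (n + 1))
      (f := fun j => ‖a j‖ * ‖a (n - j)‖)
    simp only [Finset.card_range, mul_pow] at h2
    push_cast at h2
    have h3 := (pow_le_pow_left₀ (norm_nonneg _) h1 2).trans h2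
    have hn : (0 : ℝ) < (n : ℝ) + 1 := by positivity
    rw [one_div, inv_mul_le_iff₀ hn]
    exact h3
  have hl := Summable.of_nonneg_of_le (fun n => by positivity) hb hs
  refine ⟨hl, ?_⟩
  rw [sq (∑' n : ℕ, ‖a n‖ ^ 2), he]
  exact hl.tsum_le_tsum hb hs
end

section
/- Let Ω ⊆ ℂ be open, let m ≥ 0 and μ > 0, and set λ := √(μ + m²). Define the Wirtinger derivatives ∂_z g(z) := (1/2)(∂₁g(z) − i·∂₂g(z)) and ∂_{z̄} g(z) := (1/2)(∂₁g(z) + i·∂₂g(z)), where ∂₁g(z) and ∂₂g(z) are the directional derivatives of g at z along 1 and along i, respectively. Let u : ℂ → ℂ be real-differentiable on Ω such that the function z ↦ ∂_{z̄} u(z) is real-differentiable on Ω and 4·∂_z(∂_{z̄} u)(z) = −μ·u(z) for all z ∈ Ω. Define v(z) := (−2i/(λ + m))·∂_{z̄} u(z). Then λ > m, and on Ω both equations −2i·∂_z v = (λ − m)·u and −2i·∂_{z̄} u = (λ + m)·v hold. -/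
open Complex

/-- Wirtinger derivative ∂_z g = (1/2)(∂₁g − i ∂₂g), where ∂₁, ∂₂ are the directional
derivatives along `1` and along `i`. -/
noncomputable def wirtingerZ (g : ℂ → ℂ) (z : ℂ) : ℂ :=
  (1/2) * (lineDeriv ℝ g z 1 - Complex.I * lineDeriv ℝ g z Complex.I)

/-- Wirtinger derivative ∂_{z̄} g = (1/2)(∂₁g + i ∂₂g), where ∂₁, ∂₂ are the directional
derivatives along `1` and along `i`. -/
noncomputable def wirtingerZbar (g : ℂ → ℂ) (z : ℂ) : ℂ :=
  (1/2) * (lineDeriv ℝ g z 1 + Complex.I * lineDeriv ℝ g z Complex.I)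

/-- Converse direction of the reduction in Section 3.1: from a solution `u` of
`4∂_z∂_{z̄}u = −μu` with `μ > 0`, setting `λ = √(μ+m²)` and
`v = (−2i/(λ+m))∂_{z̄}u`, one has `λ > m` and `(u, v)` solves the first-order Dirac system. -/
theorem stmt_15 (Ω : Set ℂ) (hΩ : IsOpen Ω) (m μ : ℝ) (hm : 0 ≤ m) (hμ : 0 < μ)
    (lam : ℝ) (hlam : lam = Real.sqrt (μ + m^2))
    (u : ℂ → ℂ)
    (hu : ∀ z ∈ Ω, DifferentiableAt ℝ u z)
    (hu' : ∀ z ∈ Ω, DifferentiableAt ℝ (fun w => wirtingerZbar u w) z)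
    (heq : ∀ z ∈ Ω, 4 * wirtingerZ (fun w => wirtingerZbar u w) z = -(μ : ℂ) * u z)
    (v : ℂ → ℂ)
    (hv : ∀ z : ℂ, v z = (-2 * Complex.I / (((lam : ℝ) : ℂ) + (m : ℂ))) * wirtingerZbar u z) :
    lam > m ∧
      (∀ z ∈ Ω, -2 * Complex.I * wirtingerZ v z = ((lam - m : ℝ) : ℂ) * u z) ∧
      (∀ z ∈ Ω, -2 * Complex.I * wirtingerZbar u z = ((lam + m : ℝ) : ℂ) * v z) := by
  have hpos : 0 ≤ μ + m ^ 2 := by positivity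
  have hsq : lam ^ 2 = μ + m ^ 2 := by rw [hlam, Real.sq_sqrt hpos]
  have hl0 : 0 ≤ lam := by rw [hlam]; exact Real.sqrt_nonneg _
  have hlm : m < lam := by nlinarith
  have hne : (lam : ℂ) + (m : ℂ) ≠ 0 := by
    have h : lam + m ≠ 0 := by linarith
    exact_mod_cast h
  have hsqC : (lam : ℂ) ^ 2 = μ + (m : ℂ) ^ 2 := by exact_mod_cast hsq
  refine ⟨hlm, fun z hz => ?_, fun z _ => ?_⟩
  · have hL : ∀ d : ℂ, lineDeriv ℝ v z d = (-2 * Complex.I / ((lam : ℂ) + (m : ℂ))) *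
        lineDeriv ℝ (fun w => wirtingerZbar u w) z d := by
      intro d
      have hvf : v = fun w => (-2 * Complex.I / ((lam : ℂ) + (m : ℂ))) * wirtingerZbar u w :=
        funext hv
      rw [hvf]
      unfold lineDeriv
      exact deriv_const_mul_field _
    have hW : wirtingerZ v z = (-2 * Complex.I / ((lam : ℂ) + (m : ℂ))) *
        wirtingerZ (fun w => wirtingerZbar u w) z := by
      unfold wirtingerZ
      rw [hL, hL]
      ring
    have h := heq z hz
    rw [hW]
    generalize wirtingerZ (fun w => wirtingerZbar u w) z = W at h
    push_cast
    field_simp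
    linear_combination (4 * W) * Complex.I_sq - h - u z * hsqC
  · rw [hv z]
    push_cast
    field_simp
end
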